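/- arXiv:1902.02237 — 2 statements merged into one kernel-verified Lean document; each statement's English description precedes it below -/
import Mathlib

section
/- Let k be a field and let R be a noetherian Hopf k-algebra such that R⊗_k R is a domain. Suppose T=R[x;σ,δ] admits a Hopf algebra structure with R a Hopf subalgebra and that Δ(x) = s(1⊗x) + t(x⊗1) + w with s,t,w ∈ R⊗_k R. Then after a change of the variable x one may assume Δ(x) = β^{-1}⊗x + x⊗1 + w' where β is a grouplike element of R and w' = ∑w'₁⊗w'₂ ∈ R⊗_k R; moreover S(x) = -β(x + ∑w'₁S(w'₂)) and β·(∑w'₁S(w'₂)) = ∑S(w'₁)w'₂. -/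
open scoped TensorProduct

/-- `T` is an Ore (skew polynomial) extension `R[x; σ, δ]` of `R`, embedded via `ι`:
`δ` is a `σ`-derivation, `ι` is injective, `x · ι(r) = ι(σ r) · x + ι(δ r)`, and
`T` is a free left `R`-module with basis `{xⁱ : i ≥ 0}`. -/
structure IsOreExtension (k : Type*) {R T : Type*} [Field k] [Ring R] [Algebra k R]
    [Ring T] [Algebra k T] (σ : R ≃ₐ[k] R) (δ : R →ₗ[k] R) (ι : R →ₐ[k] T) (x : T) : Prop where
  isSigmaDerivation : ∀ a b : R, δ (a * b) = σ a * δ b + δ a * b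
  injective : Function.Injective ι
  rel : ∀ r : R, x * ι r = ι (σ r) * x + ι (δ r)
  free : ∀ t : T, ∃! a : ℕ →₀ R, t = a.sum fun i r => ι r * x ^ i

/-- A Hopf `k`-algebra structure on the `k`-algebra `T`, bundled as data. -/
structure HopfAlgebraStructure (k T : Type*) [Field k] [Ring T] [Algebra k T] where
  comul : T →ₗ[k] T ⊗[k] T
  counit : T →ₗ[k] k
  antipode : T →ₗ[k] T
  comul_one : comul 1 = 1
  comul_mul : ∀ a b : T, comul (a * b) = comul a * comul b
  counit_one : counit 1 = 1
  counit_mul : ∀ a b : T, counit (a * b) = counit a * counit b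
  coassoc : ∀ t : T, TensorProduct.map comul LinearMap.id (comul t) =
      (TensorProduct.assoc k T T T).symm (TensorProduct.map LinearMap.id comul (comul t))
  counit_comul : ∀ t : T,
      TensorProduct.lid k T (TensorProduct.map counit LinearMap.id (comul t)) = t
  comul_counit : ∀ t : T,
      TensorProduct.rid k T (TensorProduct.map LinearMap.id counit (comul t)) = t
  antipode_mul_id : ∀ t : T,
      LinearMap.mul' k T (TensorProduct.map antipode LinearMap.id (comul t))
        = algebraMap k T (counit t)
  id_mul_antipode : ∀ t : T,
      LinearMap.mul' k T (TensorProduct.map LinearMap.id antipode (comul t))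
        = algebraMap k T (counit t)

/-- The Hopf algebra structure `H` on `T` extends that of the Hopf algebra `R`, i.e. `R` is
(the image of) a Hopf subalgebra of `T` via the injective algebra map `ι`. -/
def ExtendsHopf (k : Type*) {R T : Type*} [Field k] [Ring R] [HopfAlgebra k R]
    [Ring T] [Algebra k T] (ι : R →ₐ[k] T) (H : HopfAlgebraStructure k T) : Prop :=
  (∀ r : R, H.counit (ι r) = Coalgebra.counit r) ∧
  (∀ r : R, H.comul (ι r) =
      TensorProduct.map ι.toLinearMap ι.toLinearMap (Coalgebra.comul r)) ∧
  (∀ r : R, H.antipode (ι r) = ι (HopfAlgebra.antipode (R := k) r))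

/-!
Let `p : T → R` read off the coefficient of `x` and let `f = ε ∘ p`. Acting with `f` on either side
of `Δ(x)` sends `x` to elements `a, b ∈ R`, and coassociativity turns into `Δ(a) = s(1 ⊗ a)`,
`Δ(b) = t(b ⊗ 1)` and `t(a ⊗ 1) = s(1 ⊗ b)`, while `ε(a) = ε(b) = 1`. The element `c = ∑ S(s₁)s₂` is
inverse to `a`: the antipode law at `a` gives `ca = 1`, and evaluating the convolution identity
`id * (S * p) = p` at `x` gives `ac = 1`. The three equations then make `g = a⁻¹b` grouplike, so `b`
is a unit too, and `u = b⁻¹` satisfies `Δ(u)s = g⁻¹ ⊗ u` and `Δ(u)t = u ⊗ 1`. Hence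
`y = ux - ε(ux)` is the required variable with `β = g`, and the two formulas for the antipode are
the two antipode laws at `y`.
-/

section Triangular

variable {ι R M : Type*} [Ring R] [AddCommGroup M] [Module R M]

open Submodule Set

theorem existsUnique_sum_smul_iff {v : ι → M} :
    (∀ m, ∃! a : ι →₀ R, m = a.sum fun i r ↦ r • v i) ↔
      LinearIndependent R v ∧ span R (range v) = ⊤ := by
  rw [LinearIndependent, ← Finsupp.range_linearCombination, LinearMap.range_eq_top,
    ← Function.Bijective, Function.bijective_iff_existsUnique]
  simp only [Finsupp.linearCombination_apply, eq_comm]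

variable [LinearOrder ι]

theorem linearIndependent_of_smul_mem_span_Iio {v : ι → M}
    (h : ∀ i (a : R), a • v i ∈ span R (v '' Iio i) → a = 0) : LinearIndependent R v := by
  rw [linearIndependent_iff]
  intro l hl
  by_contra hne
  have hs : l.support.Nonempty := Finsupp.support_nonempty_iff.mpr hne
  set i := l.support.max' hs
  have hi : i ∈ l.support := Finset.max'_mem _ _
  refine Finsupp.mem_support_iff.mp hi (h i _ ?_)
  have hsum : l i • v i = -∑ j ∈ l.support.erase i, l j • v j :=
    eq_neg_of_add_eq_zero_left <| (Finset.add_sum_erase _ _ hi).trans hl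
  rw [hsum]
  refine neg_mem (sum_mem fun j hj ↦ smul_mem _ _ (subset_span ⟨j, ?_, rfl⟩))
  exact lt_of_le_of_ne (Finset.le_max' _ _ (Finset.mem_of_mem_erase hj)) (Finset.ne_of_mem_erase hj)

variable {b c : ι → M} {p : ι → Rˣ}

theorem linearIndependent_of_triangular (hb : LinearIndependent R b)
    (h : ∀ i, c i - p i • b i ∈ span R (b '' Iio i)) : LinearIndependent R c := by
  refine linearIndependent_of_smul_mem_span_Iio fun i a ha ↦ ?_
  have hspan : span R (c '' Iio i) ≤ span R (b '' Iio i) := by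
    rw [span_le, image_subset_iff]
    intro j hj
    have hbj : p j • b j ∈ span R (b '' Iio i) := smul_mem _ _ (subset_span ⟨j, hj, rfl⟩)
    have hcj := span_mono (image_mono (Iio_subset_Iio (le_of_lt hj))) (h j)
    have hcj' : c j ∈ span R (b '' Iio i) := by
      simpa only [sub_add_cancel] using add_mem hcj hbj
    exact hcj'
  have hap : (a * p i) • b i ∈ span R (b '' Iio i) := by
    have := sub_mem (hspan ha) (smul_mem _ a (h i))
    rwa [← smul_sub, sub_sub_cancel, Units.smul_def, smul_smul] at this
  have hIio : Iio i ⊆ univ \ {i} := fun j hj ↦ ⟨trivial, ne_of_lt hj⟩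
  exact (p i).mul_left_eq_zero.mp <|
    hb.eq_zero_of_smul_mem_span i _ (span_mono (image_mono hIio) hap)

theorem span_range_eq_top_of_triangular [WellFoundedLT ι] (hb : span R (range b) = ⊤)
    (h : ∀ i, c i - p i • b i ∈ span R (b '' Iio i)) : span R (range c) = ⊤ := by
  rw [eq_top_iff, ← hb, span_le, range_subset_iff]
  intro i
  induction i using WellFoundedLT.induction with
  | ind i ih =>
    have hlow : c i - p i • b i ∈ span R (range c) :=
      span_le.mpr (image_subset_iff.mpr ih) (h i)
    have hpb : p i • b i ∈ span R (range c) := by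
      simpa only [sub_sub_cancel] using sub_mem (subset_span (mem_range_self i)) hlow
    have hb' : b i ∈ span R (range c) := by
      simpa only [Units.smul_def, smul_smul, Units.inv_mul, one_smul] using
        smul_mem _ (↑(p i)⁻¹ : R) hpb
    exact hb'

end Triangular

section PowersOfSkewVariable

variable {R T : Type*} [Ring R] [Ring T] [Module R T]
  {σ : R →+* R} {δ : R → R} {x : T}

open Submodule Set

theorem mul_mem_span_pow_Iio_succ (hx : ∀ r t, x * r • t = σ r • (x * t) + δ r • t)
    {n : ℕ} {t : T} (ht : t ∈ span R ((x ^ ·) '' Iio n)) :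
    x * t ∈ span R ((x ^ ·) '' Iio (n + 1)) := by
  induction ht using span_induction with
  | mem _ h =>
    obtain ⟨i, hi, rfl⟩ := h
    exact subset_span ⟨i + 1, Nat.succ_lt_succ hi, pow_succ' x i⟩
  | zero => simp only [mul_zero, zero_mem]
  | add _ _ _ _ hs ht => rw [mul_add]; exact add_mem hs ht
  | smul r t ht ih =>
    rw [hx]
    have ht' := span_mono (image_mono (Iio_subset_Iio n.le_succ)) ht
    exact add_mem (smul_mem _ _ ih) (smul_mem _ _ ht')

variable [IsScalarTower R T T]

theorem exists_pow_sub_smul_pow_mem_span_Iio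
    (hx : ∀ r t, x * r • t = σ r • (x * t) + δ r • t) (u : Rˣ) (v : R) (n : ℕ) :
    ∃ p : Rˣ, (u • x + v • 1) ^ n - p • x ^ n ∈ span R ((x ^ ·) '' Iio n) := by
  induction n with
  | zero => exact ⟨1, by simp⟩
  | succ n ih =>
    obtain ⟨p, hp⟩ := ih
    set l := (u • x + v • 1) ^ n - p • x ^ n with hl
    refine ⟨u * Units.map σ p, ?_⟩
    have hmono := span_mono (R := R) (image_mono (f := (x ^ ·)) (Iio_subset_Iio n.le_succ))
    have hxn : x ^ n ∈ span R ((x ^ ·) '' Iio (n + 1)) := subset_span ⟨n, n.lt_succ_self, rfl⟩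
    have hexpand : (u • x + v • 1) ^ (n + 1) - (u * Units.map (σ : R →* R) p) • x ^ (n + 1) =
        (u * δ p + v * p) • x ^ n + u • (x * l) + v • l := by
      have hpow : (u • x + v • 1) ^ n = p • x ^ n + l := by rw [hl, add_sub_cancel]
      rw [pow_succ', hpow, pow_succ' x, mul_add]
      simp only [Units.smul_def, add_mul, smul_mul_assoc, one_mul, hx, smul_add, smul_smul,
        add_smul, Units.val_mul, Units.coe_map, MonoidHom.coe_coe]
      abel
    rw [hexpand]
    have hxl := smul_mem _ (u : R) (mul_mem_span_pow_Iio_succ hx hp)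
    exact add_mem (add_mem (smul_mem _ _ hxn) hxl) (smul_mem _ _ (hmono hp))

end PowersOfSkewVariable

namespace IsOreExtension

variable {k R T : Type*} [Field k] [Ring R] [Algebra k R] [Ring T] [Algebra k T]
  {σ : R ≃ₐ[k] R} {δ : R →ₗ[k] R} {ι : R →ₐ[k] T} {x : T}

theorem exists_coeff (hT : IsOreExtension k σ δ ι x) (n : ℕ) :
    ∃ p : T →ₗ[k] R, ∀ i r, p (ι r * x ^ i) = Finsupp.single i r n := by
  let _ : Module R T := Module.compHom T ι.toRingHom
  have _ : IsScalarTower k R T := ⟨fun c r t ↦ by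
    change ι (c • r) * t = c • (ι r * t); rw [map_smul, smul_mul_assoc]⟩
  obtain ⟨hli, hspan⟩ := existsUnique_sum_smul_iff.mp hT.free
  let b : Module.Basis ℕ R T := .mk hli hspan.ge
  refine ⟨(b.coord n).restrictScalars k, fun i r ↦ ?_⟩
  have hb : ι r * x ^ i = r • b i := by rw [Module.Basis.mk_apply]; rfl
  simp [hb, Finsupp.single_apply]

theorem unit_mul_add (hT : IsOreExtension k σ δ ι x) (u : Rˣ) (v : R) :
    ∃ (σ' : R ≃ₐ[k] R) (δ' : R →ₗ[k] R), IsOreExtension k σ' δ' ι (ι u * x + ι v) := by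
  let σ' : R ≃ₐ[k] R := σ.trans (MulSemiringAction.toAlgEquiv k R (ConjAct.toConjAct u))
  have hσ' (r : R) : σ' r = u * σ r * ↑u⁻¹ := rfl
  let δ' : R →ₗ[k] R := LinearMap.mulLeft k (u : R) ∘ₗ δ + LinearMap.mulLeft k v -
    LinearMap.mulRight k v ∘ₗ σ'.toLinearMap
  have hδ' (r : R) : δ' r = u * δ r + v * r - σ' r * v := rfl
  have hσ'u (r : R) : σ' r * u = u * σ r := by rw [hσ', Units.inv_mul_cancel_right]
  refine ⟨σ', δ', fun a b ↦ ?_, hT.injective, fun r ↦ ?_, ?_⟩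
  · have hcomm : σ' a * (u * δ b) = u * (σ a * δ b) := by
      rw [← mul_assoc, hσ'u, mul_assoc]
    simp only [hδ', hT.isSigmaDerivation, map_mul, mul_sub, mul_add, hcomm]
    noncomm_ring
  · have hcomm : ι (σ' r) * (ι u * x) = ι u * (ι (σ r) * x) := by
      rw [← mul_assoc, ← map_mul, hσ'u, map_mul, mul_assoc]
    rw [add_mul, mul_assoc, hT.rel, mul_add (ι (σ' r)), hcomm, hδ']
    simp only [map_sub, map_add, map_mul]
    noncomm_ring
  · let _ : Module R T := Module.compHom T ι.toRingHom
    have _ : IsScalarTower R T T := ⟨fun _ _ _ ↦ mul_assoc _ _ _⟩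
    have hx (r : R) (t : T) : x * r • t = σ r • (x * t) + δ r • t := by
      change x * (ι r * t) = ι (σ r) * (x * t) + ι (δ r) * t
      rw [← mul_assoc, hT.rel, add_mul, mul_assoc]
    choose p hp using exists_pow_sub_smul_pow_mem_span_Iio (σ := (σ : R →+* R)) hx u v
    have hy : u • x + v • (1 : T) = ι u * x + ι v := congrArg (ι u * x + ·) (mul_one (ι v))
    rw [hy] at hp
    obtain ⟨hli, hspan⟩ := existsUnique_sum_smul_iff.mp hT.free
    exact existsUnique_sum_smul_iff.mpr
      ⟨linearIndependent_of_triangular hli hp, span_range_eq_top_of_triangular hspan hp⟩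

end IsOreExtension

section CoalgebraHit

open TensorProduct Coalgebra

variable {k C : Type*} [CommSemiring k] [AddCommMonoid C] [Module k C] [Coalgebra k C]

/-- The left action of the dual algebra on a coalgebra, `f ⇀ c = ∑ c₁ f(c₂)`. -/
noncomputable def leftHit (f : C →ₗ[k] k) : C →ₗ[k] C :=
  TensorProduct.rid k C ∘ₗ f.lTensor C ∘ₗ comul

/-- The right action of the dual algebra on a coalgebra, `c ↼ f = ∑ f(c₁) c₂`. -/
noncomputable def rightHit (f : C →ₗ[k] k) : C →ₗ[k] C :=
  TensorProduct.lid k C ∘ₗ f.rTensor C ∘ₗ comul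

theorem comul_leftHit (f : C →ₗ[k] k) (c : C) :
    comul (leftHit f c) = (leftHit f).lTensor C (comul (R := k) c) := by
  have hassoc (z : (C ⊗[k] C) ⊗[k] C) :
      TensorProduct.rid k (C ⊗[k] C) (f.lTensor (C ⊗[k] C) z) =
        (TensorProduct.rid k C ∘ₗ f.lTensor C).lTensor C (TensorProduct.assoc k C C C z) := by
    suffices h : (TensorProduct.rid k (C ⊗[k] C)).toLinearMap ∘ₗ f.lTensor (C ⊗[k] C) =
        (TensorProduct.rid k C ∘ₗ f.lTensor C).lTensor C ∘ₗ
          (TensorProduct.assoc k C C C).toLinearMap from congr($h z)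
    ext a b c
    simp
  have hcomul (z : C ⊗[k] C) : comul (TensorProduct.rid k C (f.lTensor C z)) =
      TensorProduct.rid k (C ⊗[k] C) (f.lTensor (C ⊗[k] C) (comul.rTensor C z)) := by
    suffices h : comul ∘ₗ (TensorProduct.rid k C).toLinearMap ∘ₗ f.lTensor C =
        (TensorProduct.rid k (C ⊗[k] C)).toLinearMap ∘ₗ f.lTensor (C ⊗[k] C) ∘ₗ
          comul.rTensor C from congr($h z)
    ext a b
    simp
  rw [leftHit, LinearMap.comp_apply, LinearMap.comp_apply, LinearEquiv.coe_coe, hcomul, hassoc,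
    coassoc_apply, ← LinearMap.comp_assoc, LinearMap.lTensor_comp_apply _ _ comul]

theorem comul_rightHit (f : C →ₗ[k] k) (c : C) :
    comul (rightHit f c) = (rightHit f).rTensor C (comul (R := k) c) := by
  have hassoc (z : C ⊗[k] (C ⊗[k] C)) :
      TensorProduct.lid k (C ⊗[k] C) (f.rTensor (C ⊗[k] C) z) =
        (TensorProduct.lid k C ∘ₗ f.rTensor C).rTensor C
          ((TensorProduct.assoc k C C C).symm z) := by
    suffices h : (TensorProduct.lid k (C ⊗[k] C)).toLinearMap ∘ₗ f.rTensor (C ⊗[k] C) =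
        (TensorProduct.lid k C ∘ₗ f.rTensor C).rTensor C ∘ₗ
          (TensorProduct.assoc k C C C).symm.toLinearMap from congr($h z)
    ext a b c
    simp [TensorProduct.smul_tmul']
  have hcomul (z : C ⊗[k] C) : comul (TensorProduct.lid k C (f.rTensor C z)) =
      TensorProduct.lid k (C ⊗[k] C) (f.rTensor (C ⊗[k] C) (comul.lTensor C z)) := by
    suffices h : comul ∘ₗ (TensorProduct.lid k C).toLinearMap ∘ₗ f.rTensor C =
        (TensorProduct.lid k (C ⊗[k] C)).toLinearMap ∘ₗ f.rTensor (C ⊗[k] C) ∘ₗ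
          comul.lTensor C from congr($h z)
    ext a b
    simp
  rw [rightHit, LinearMap.comp_apply, LinearMap.comp_apply, LinearEquiv.coe_coe, hcomul, hassoc,
    coassoc_symm_apply, ← LinearMap.comp_assoc, LinearMap.rTensor_comp_apply _ _ comul]

theorem rTensor_leftHit_comul (f : C →ₗ[k] k) (c : C) :
    (leftHit f).rTensor C (comul c) = (rightHit f).lTensor C (comul (R := k) c) := by
  have hassoc (z : (C ⊗[k] C) ⊗[k] C) :
      (TensorProduct.rid k C ∘ₗ f.lTensor C).rTensor C z =
        (TensorProduct.lid k C ∘ₗ f.rTensor C).lTensor C (TensorProduct.assoc k C C C z) := by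
    suffices h : (TensorProduct.rid k C ∘ₗ f.lTensor C).rTensor C =
        (TensorProduct.lid k C ∘ₗ f.rTensor C).lTensor C ∘ₗ
          (TensorProduct.assoc k C C C).toLinearMap from congr($h z)
    ext a b c
    simp [TensorProduct.smul_tmul]
  rw [leftHit, rightHit, ← LinearMap.comp_assoc, ← LinearMap.comp_assoc,
    LinearMap.rTensor_comp_apply, LinearMap.lTensor_comp_apply, hassoc, coassoc_apply]

theorem counit_leftHit (f : C →ₗ[k] k) (c : C) : counit (leftHit f c) = f c := by
  suffices h : counit ∘ₗ (TensorProduct.rid k C).toLinearMap ∘ₗ f.lTensor C =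
      (f ∘ₗ (TensorProduct.lid k C).toLinearMap) ∘ₗ counit.rTensor C by
    simpa [leftHit] using congr($h (comul c))
  ext a b
  simp [mul_comm]

theorem counit_rightHit (f : C →ₗ[k] k) (c : C) : counit (rightHit f c) = f c := by
  suffices h : counit ∘ₗ (TensorProduct.lid k C).toLinearMap ∘ₗ f.rTensor C =
      (f ∘ₗ (TensorProduct.rid k C).toLinearMap) ∘ₗ counit.lTensor C by
    simpa [rightHit] using congr($h (comul c))
  ext a b
  simp [mul_comm]

end CoalgebraHit

section HopfAlgebra

open TensorProduct Coalgebra HopfAlgebra LinearMap WithConv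

variable {k A B : Type*} [CommSemiring k]

section Algebra

variable [Semiring A] [Algebra k A] [Semiring B] [Algebra k B] {M N P : Type*}
  [AddCommMonoid M] [Module k M] [AddCommMonoid N] [Module k N] [AddCommMonoid P] [Module k P]

theorem rid_map (φ : M →ₗ[k] N) (f : P →ₗ[k] k) (z : M ⊗[k] P) :
    TensorProduct.rid k N (TensorProduct.map φ f z) =
      φ (TensorProduct.rid k M (f.lTensor M z)) := by
  induction z with
  | zero => simp
  | add z z' hz hz' => simp only [map_add, hz, hz']
  | tmul m n => simp

theorem lid_map (f : P →ₗ[k] k) (φ : M →ₗ[k] N) (z : P ⊗[k] M) :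
    TensorProduct.lid k N (TensorProduct.map f φ z) =
      φ (TensorProduct.lid k M (f.rTensor M z)) := by
  induction z with
  | zero => simp
  | add z z' hz hz' => simp only [map_add, hz, hz']
  | tmul m n => simp

theorem mul'_map_smulRight (φ : M →ₗ[k] A) (f : P →ₗ[k] k) (a : A) (z : M ⊗[k] P) :
    mul' k A (TensorProduct.map φ (f.smulRight a) z) =
      φ (TensorProduct.rid k M (f.lTensor M z)) * a := by
  induction z with
  | zero => simp
  | add z z' hz hz' => simp only [map_add, add_mul, hz, hz']
  | tmul m n => simp

theorem mul'_rTensor_mul_one_tmul (f : B →ₗ[k] A) (z : B ⊗[k] A) (a : A) :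
    mul' k A (f.rTensor A (z * 1 ⊗ₜ a)) = mul' k A (f.rTensor A z) * a := by
  induction z with
  | zero => simp
  | add z z' hz hz' => simp only [add_mul, map_add, hz, hz']
  | tmul b c => simp [mul_assoc]

end Algebra

section Bialgebra

variable [Semiring A] [Bialgebra k A]

theorem rid_lTensor_counit_mul (y z : A ⊗[k] A) :
    TensorProduct.rid k A (counit.lTensor A (y * z)) =
      TensorProduct.rid k A (counit.lTensor A y) * TensorProduct.rid k A (counit.lTensor A z) :=
  map_mul ((Algebra.TensorProduct.rid k k A).toAlgHom.comp
    (Algebra.TensorProduct.map (.id k A) (Bialgebra.counitAlgHom k A))) y z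

theorem lid_rTensor_counit_mul (y z : A ⊗[k] A) :
    TensorProduct.lid k A (counit.rTensor A (y * z)) =
      TensorProduct.lid k A (counit.rTensor A y) * TensorProduct.lid k A (counit.rTensor A z) :=
  map_mul ((Algebra.TensorProduct.lid k A).toAlgHom.comp
    (Algebra.TensorProduct.map (Bialgebra.counitAlgHom k A) (.id k A))) y z

theorem isGroupLikeElem_inv_mul {s t : A ⊗[k] A} {a : Aˣ} {b : A}
    (ha : comul (a : A) = s * 1 ⊗ₜ[k] (a : A)) (hb : comul b = t * b ⊗ₜ[k] 1)
    (hab : t * (a : A) ⊗ₜ[k] 1 = s * 1 ⊗ₜ[k] b) (hεa : counit (R := k) (a : A) = 1)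
    (hεb : counit (R := k) b = 1) : IsGroupLikeElem k (↑a⁻¹ * b) where
  counit_eq_one := by
    have h : counit (R := k) (a * (↑a⁻¹ * b)) = 1 := by rwa [Units.mul_inv_cancel_left]
    rwa [Bialgebra.counit_mul, hεa, one_mul] at h
  comul_eq_tmul_self := by
    set g : A := ↑a⁻¹ * b
    have hag : a * g = b := Units.mul_inv_cancel_left a b
    have hcancel : IsUnit (comul (R := k) (a : A)) :=
      a.isUnit.map (Bialgebra.comulAlgHom k A)
    refine hcancel.mul_left_cancel ?_
    calc comul (a : A) * comul g
        = t * (a : A) ⊗ₜ[k] 1 * g ⊗ₜ 1 := by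
          rw [← Bialgebra.comul_mul, hag, hb, mul_assoc, Algebra.TensorProduct.tmul_mul_tmul,
            hag, mul_one]
      _ = s * 1 ⊗ₜ[k] (a : A) * g ⊗ₜ g := by
          rw [hab]
          simp only [mul_assoc, Algebra.TensorProduct.tmul_mul_tmul, one_mul, mul_one, hag]
      _ = comul (a : A) * g ⊗ₜ g := by rw [ha]

theorem comul_unit_mul_of_comul_inv {t : A ⊗[k] A} {u : Aˣ}
    (hu : comul (↑u⁻¹ : A) = t * (↑u⁻¹ : A) ⊗ₜ[k] 1) :
    comul (u : A) * t = (u : A) ⊗ₜ[k] 1 :=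
  calc comul (u : A) * t
      = comul (u : A) * comul (↑u⁻¹ : A) * (u : A) ⊗ₜ[k] 1 := by
        rw [hu]
        simp only [mul_assoc, Algebra.TensorProduct.tmul_mul_tmul, Units.inv_mul, mul_one,
          ← Algebra.TensorProduct.one_def]
    _ = (u : A) ⊗ₜ[k] 1 := by
      rw [← Bialgebra.comul_mul, Units.mul_inv, Bialgebra.comul_one, one_mul]

theorem comul_unit_mul_eq_tmul {s t : A ⊗[k] A} {u : Aˣ} {a : A}
    (hu : comul (↑u⁻¹ : A) = t * (↑u⁻¹ : A) ⊗ₜ[k] 1)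
    (ha : t * a ⊗ₜ[k] 1 = s * 1 ⊗ₜ[k] (↑u⁻¹ : A)) :
    comul (u : A) * s = (u * a) ⊗ₜ[k] (u : A) :=
  calc comul (u : A) * s
      = comul (u : A) * (s * 1 ⊗ₜ[k] (↑u⁻¹ : A)) * 1 ⊗ₜ[k] (u : A) := by
        simp only [mul_assoc, Algebra.TensorProduct.tmul_mul_tmul, Units.inv_mul, mul_one,
          ← Algebra.TensorProduct.one_def]
    _ = (u : A) ⊗ₜ[k] 1 * a ⊗ₜ[k] 1 * 1 ⊗ₜ[k] (u : A) := by
      rw [← ha, ← mul_assoc, comul_unit_mul_of_comul_inv hu]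
    _ = (u * a) ⊗ₜ[k] (u : A) := by
      simp only [Algebra.TensorProduct.tmul_mul_tmul, mul_one, one_mul]

end Bialgebra

section Antipode

variable [Semiring A] [Semiring B] [HopfAlgebra k A] [HopfAlgebra k B]

theorem map_antipode (φ : A →ₐc[k] B) (a : A) : φ (antipode k a) = antipode k (φ a) := by
  suffices h : toConv ((φ : A →ₗ[k] B) ∘ₗ antipode k) = toConv (antipode k ∘ₗ (φ : A →ₗ[k] B)) from
    congr($h a)
  refine left_inv_eq_right_inv (a := toConv (φ : A →ₗ[k] B)) ?_ ?_
  · have h := algHom_comp_convMul_distrib (φ : A →ₐ[k] B) (toConv (antipode k)) (toConv .id)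
    rw [antipode_mul_id] at h
    refine (congrArg toConv h.symm).trans ?_
    ext a
    exact AlgHomClass.commutes φ (counit a)
  · have h := convMul_comp_coalgHom_distrib (toConv .id) (toConv (antipode k)) (φ : A →ₗc[k] B)
    rw [id_mul_antipode] at h
    refine (congrArg toConv h.symm).trans ?_
    ext a
    simp

theorem mul'_rTensor_antipode_comul_mul (a : A) (z : A ⊗[k] A) :
    mul' k A ((antipode k).rTensor A (comul a * z)) =
      counit (R := k) a • mul' k A ((antipode k).rTensor A z) := by
  have hmul (y : A ⊗[k] A) (b c : A) : mul' k A ((antipode k).rTensor A (y * b ⊗ₜ c)) =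
      antipode k b * mul' k A ((antipode k).rTensor A y) * c := by
    induction y with
    | zero => simp
    | add y y' hy hy' => simp only [add_mul, map_add, mul_add, hy, hy']
    | tmul d e => simp [antipode_mul_antidistrib, mul_assoc]
  induction z with
  | zero => simp
  | add z z' hz hz' => simp only [mul_add, map_add, smul_add, hz, hz']
  | tmul b c => simp [hmul, Algebra.algebraMap_eq_smul_one]

theorem mul'_lTensor_antipode_map (φ : A →ₐc[k] B) (z : A ⊗[k] A) :
    mul' k B ((antipode k).lTensor B (TensorProduct.map (φ : A →ₗ[k] B) (φ : A →ₗ[k] B) z)) =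
      φ (mul' k A ((antipode k).lTensor A z)) := by
  induction z with
  | zero => simp
  | add z z' hz hz' => simp only [map_add, hz, hz']
  | tmul b c => simp [map_antipode]

theorem mul'_rTensor_antipode_map (φ : A →ₐc[k] B) (z : A ⊗[k] A) :
    mul' k B ((antipode k).rTensor B (TensorProduct.map (φ : A →ₗ[k] B) (φ : A →ₗ[k] B) z)) =
      φ (mul' k A ((antipode k).rTensor A z)) := by
  induction z with
  | zero => simp
  | add z z' hz hz' => simp only [map_add, hz, hz']
  | tmul b c => simp [map_antipode]

end Antipode

section SkewPrimitive

variable [Ring A] [HopfAlgebra k A] {g : GroupLike k A} {y : A} {w : A ⊗[k] A}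

theorem antipode_eq_neg_mul_add (hy : comul y = (↑g⁻¹ : A) ⊗ₜ[k] y + y ⊗ₜ[k] 1 + w)
    (hε : counit (R := k) y = 0) :
    antipode k y = -(g * (y + mul' k A ((antipode k).lTensor A w))) := by
  have hsum :
      antipode k (g : A) * antipode k y + (y + mul' k A ((antipode k).lTensor A w)) = 0 := by
    simpa [hy, hε, add_assoc] using mul_antipode_lTensor_comul_apply (R := k) y
  calc antipode k y
      = g * (antipode k (g : A) * antipode k y) := by
        rw [← mul_assoc, g.2.mul_antipode_cancel, one_mul]
    _ = _ := by rw [eq_neg_of_add_eq_zero_left hsum, mul_neg]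

theorem mul_mul'_lTensor_antipode (hy : comul y = (↑g⁻¹ : A) ⊗ₜ[k] y + y ⊗ₜ[k] 1 + w)
    (hε : counit (R := k) y = 0) :
    g * mul' k A ((antipode k).lTensor A w) = mul' k A ((antipode k).rTensor A w) := by
  have hsum : g * y + antipode k y + mul' k A ((antipode k).rTensor A w) = 0 := by
    simpa [hy, hε, g.2.antipode_antipode] using mul_antipode_rTensor_comul_apply (R := k) y
  rw [antipode_eq_neg_mul_add hy hε, mul_add, neg_add, add_neg_cancel_left] at hsum
  exact neg_add_eq_zero.mp hsum

end SkewPrimitive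

end HopfAlgebra

section LinearComul

open TensorProduct Coalgebra HopfAlgebra LinearMap

/-- The function `p` reads off the coefficient of `x`. Its values are prescribed only on the
elements `ι r`, whose coefficient is `0`, and `ι r * x`, whose coefficient `r` is on the left. -/
structure IsLinearCoeff {R T : Type*} [Zero R] [Mul T] (ι : R → T) (x : T) (p : T → R) : Prop where
  map_base (r : R) : p (ι r) = 0
  map_base_mul (r : R) : p (ι r * x) = r

section Bialgebra

variable {k R T M N : Type*} [CommSemiring k] [Semiring R] [Semiring T] [Bialgebra k R]
  [Bialgebra k T] [AddCommMonoid M] [Module k M] [AddCommMonoid N] [Module k N]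
  {ι : R →ₐc[k] T} {x : T} {s t w : R ⊗[k] R} {p : T →ₗ[k] R} {L : T →ₗ[k] T} {a b : R}

/-- `ι ⊗ ι` as a homomorphism of algebras. -/
noncomputable abbrev tensorSquareMap (ι : R →ₐc[k] T) : R ⊗[k] R →ₐ[k] T ⊗[k] T :=
  Algebra.TensorProduct.map (ι : R →ₐ[k] T) (ι : R →ₐ[k] T)

/-- The comultiplication of `x` has the form `Δ(x) = s(1 ⊗ x) + t(x ⊗ 1) + w`, where the
coefficients `s, t, w ∈ R ⊗ R` are mapped to `T ⊗ T` by `ι ⊗ ι`. -/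
def HasLinearComul (ι : R →ₐc[k] T) (x : T) (s t w : R ⊗[k] R) : Prop :=
  comul x = tensorSquareMap ι s * 1 ⊗ₜ[k] x + tensorSquareMap ι t * x ⊗ₜ[k] 1 +
    tensorSquareMap ι w

theorem tensorSquareMap_comul (r : R) : tensorSquareMap ι (comul r) = comul (ι r) :=
  CoalgHomClass.map_comp_comul_apply ι r

theorem map_tensorSquareMap (F : T →ₗ[k] M) (G : T →ₗ[k] N) (z : R ⊗[k] R) :
    TensorProduct.map F G (tensorSquareMap ι z) =
      TensorProduct.map (F ∘ₗ (ι : R →ₗ[k] T)) (G ∘ₗ (ι : R →ₗ[k] T)) z :=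
  (TensorProduct.map_map ..).trans rfl

theorem map_tensorSquareMap_mul_one_tmul (F : T →ₗ[k] M) (G : T →ₗ[k] N) (z : R ⊗[k] R) :
    TensorProduct.map F G (tensorSquareMap ι z * 1 ⊗ₜ x) =
      TensorProduct.map (F ∘ₗ (ι : R →ₗ[k] T)) (G ∘ₗ mulRight k x ∘ₗ (ι : R →ₗ[k] T)) z := by
  induction z with
  | zero => simp
  | add z z' hz hz' => simp only [map_add, add_mul, hz, hz']
  | tmul a b => simp

theorem map_tensorSquareMap_mul_tmul_one (F : T →ₗ[k] M) (G : T →ₗ[k] N) (z : R ⊗[k] R) :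
    TensorProduct.map F G (tensorSquareMap ι z * x ⊗ₜ 1) =
      TensorProduct.map (F ∘ₗ mulRight k x ∘ₗ (ι : R →ₗ[k] T)) (G ∘ₗ (ι : R →ₗ[k] T)) z := by
  induction z with
  | zero => simp
  | add z z' hz hz' => simp only [map_add, add_mul, hz, hz']
  | tmul a b => simp

theorem map_coe_comp_mulRight (z : R ⊗[k] R) :
    TensorProduct.map (ι : R →ₗ[k] T) ((ι : R →ₗ[k] T) ∘ₗ mulRight k a) z =
      tensorSquareMap ι (z * 1 ⊗ₜ a) := by
  induction z with
  | zero => simp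
  | add z z' hz hz' => simp only [map_add, add_mul, hz, hz']
  | tmul b c => simp

theorem map_comp_mulRight_coe (z : R ⊗[k] R) :
    TensorProduct.map ((ι : R →ₗ[k] T) ∘ₗ mulRight k a) (ι : R →ₗ[k] T) z =
      tensorSquareMap ι (z * a ⊗ₜ 1) := by
  induction z with
  | zero => simp
  | add z z' hz hz' => simp only [map_add, add_mul, hz, hz']
  | tmul b c => simp

theorem leftHit_comp_coe {f : T →ₗ[k] k} (hf : f ∘ₗ (ι : R →ₗ[k] T) = 0) :
    leftHit f ∘ₗ (ι : R →ₗ[k] T) = 0 := by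
  ext r
  change TensorProduct.rid k T (TensorProduct.map .id f (comul (ι r))) = 0
  rw [← tensorSquareMap_comul, map_tensorSquareMap, hf, TensorProduct.map_zero_right,
    LinearMap.zero_apply, map_zero]

theorem rightHit_comp_coe {f : T →ₗ[k] k} (hf : f ∘ₗ (ι : R →ₗ[k] T) = 0) :
    rightHit f ∘ₗ (ι : R →ₗ[k] T) = 0 := by
  ext r
  change TensorProduct.lid k T (TensorProduct.map f .id (comul (ι r))) = 0
  rw [← tensorSquareMap_comul, map_tensorSquareMap, hf, TensorProduct.map_zero_left,
    LinearMap.zero_apply, map_zero]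

theorem IsLinearCoeff.injective (hp : IsLinearCoeff ι x p) : Function.Injective ι :=
  Function.LeftInverse.injective (g := fun y ↦ p (y * x)) hp.map_base_mul

theorem IsLinearCoeff.comp_eq_zero (hp : IsLinearCoeff ι x p) : p ∘ₗ (ι : R →ₗ[k] T) = 0 :=
  LinearMap.ext hp.map_base

theorem IsLinearCoeff.comp_mulRight (hp : IsLinearCoeff ι x p) :
    p ∘ₗ mulRight k x ∘ₗ (ι : R →ₗ[k] T) = .id :=
  LinearMap.ext hp.map_base_mul

theorem IsLinearCoeff.tensorSquareMap_injective (hp : IsLinearCoeff ι x p) :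
    Function.Injective (tensorSquareMap ι) := by
  refine Function.LeftInverse.injective
    (g := TensorProduct.map (p ∘ₗ mulRight k x) (p ∘ₗ mulRight k x)) fun z ↦ ?_
  rw [map_tensorSquareMap, LinearMap.comp_assoc, hp.comp_mulRight, TensorProduct.map_id,
    LinearMap.id_apply]

namespace HasLinearComul

theorem comul_base_mul (hx : HasLinearComul ι x s t w) (r : R) :
    comul (ι r * x) = tensorSquareMap ι (comul r * s) * 1 ⊗ₜ[k] x +
      tensorSquareMap ι (comul r * t) * x ⊗ₜ[k] 1 + tensorSquareMap ι (comul r * w) := by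
  rw [Bialgebra.comul_mul, hx, mul_add, mul_add, ← mul_assoc, ← mul_assoc,
    ← tensorSquareMap_comul, ← map_mul, ← map_mul, ← map_mul]

theorem map_comul_of_right_eq_zero (hx : HasLinearComul ι x s t w) (F : T →ₗ[k] M)
    {G : T →ₗ[k] N} (hG : G ∘ₗ (ι : R →ₗ[k] T) = 0) (r : R) :
    TensorProduct.map F G (comul (ι r * x)) =
      TensorProduct.map (F ∘ₗ (ι : R →ₗ[k] T)) (G ∘ₗ mulRight k x ∘ₗ (ι : R →ₗ[k] T))
        (comul r * s) := by
  rw [hx.comul_base_mul, map_add, map_add, map_tensorSquareMap_mul_one_tmul,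
    map_tensorSquareMap_mul_tmul_one, map_tensorSquareMap, hG, TensorProduct.map_zero_right,
    TensorProduct.map_zero_right, LinearMap.zero_apply, LinearMap.zero_apply, add_zero, add_zero]

theorem map_comul_of_left_eq_zero (hx : HasLinearComul ι x s t w) {F : T →ₗ[k] M}
    (G : T →ₗ[k] N) (hF : F ∘ₗ (ι : R →ₗ[k] T) = 0) (r : R) :
    TensorProduct.map F G (comul (ι r * x)) =
      TensorProduct.map (F ∘ₗ mulRight k x ∘ₗ (ι : R →ₗ[k] T)) (G ∘ₗ (ι : R →ₗ[k] T))
        (comul r * t) := by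
  rw [hx.comul_base_mul, map_add, map_add, map_tensorSquareMap_mul_one_tmul,
    map_tensorSquareMap_mul_tmul_one, map_tensorSquareMap, hF, TensorProduct.map_zero_left,
    TensorProduct.map_zero_left, LinearMap.zero_apply, LinearMap.zero_apply, zero_add, add_zero]

theorem leftHit_base_mul (hx : HasLinearComul ι x s t w) (hp : IsLinearCoeff ι x p) (r : R) :
    leftHit (counit ∘ₗ p) (ι r * x) = ι (r * TensorProduct.rid k R (counit.lTensor R s)) := by
  have hf : (counit ∘ₗ p) ∘ₗ (ι : R →ₗ[k] T) = 0 := by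
    rw [LinearMap.comp_assoc, hp.comp_eq_zero, LinearMap.comp_zero]
  calc leftHit (counit ∘ₗ p) (ι r * x)
      = TensorProduct.rid k T (TensorProduct.map .id (counit ∘ₗ p) (comul (ι r * x))) := rfl
    _ = ι (TensorProduct.rid k R (counit.lTensor R (comul r * s))) := by
      rw [hx.map_comul_of_right_eq_zero _ hf, LinearMap.comp_assoc _ p, hp.comp_mulRight,
        LinearMap.id_comp, LinearMap.comp_id, rid_map]
      rfl
    _ = _ := by simp [rid_lTensor_counit_mul]

theorem rightHit_base_mul (hx : HasLinearComul ι x s t w) (hp : IsLinearCoeff ι x p) (r : R) :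
    rightHit (counit ∘ₗ p) (ι r * x) = ι (r * TensorProduct.lid k R (counit.rTensor R t)) := by
  have hf : (counit ∘ₗ p) ∘ₗ (ι : R →ₗ[k] T) = 0 := by
    rw [LinearMap.comp_assoc, hp.comp_eq_zero, LinearMap.comp_zero]
  calc rightHit (counit ∘ₗ p) (ι r * x)
      = TensorProduct.lid k T (TensorProduct.map (counit ∘ₗ p) .id (comul (ι r * x))) := rfl
    _ = ι (TensorProduct.lid k R (counit.rTensor R (comul r * t))) := by
      rw [hx.map_comul_of_left_eq_zero _ hf, LinearMap.comp_assoc _ p, hp.comp_mulRight,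
        LinearMap.id_comp, LinearMap.comp_id, lid_map]
      rfl
    _ = _ := by simp [lid_rTensor_counit_mul]

theorem lTensor_comul (hx : HasLinearComul ι x s t w) (hL : L ∘ₗ (ι : R →ₗ[k] T) = 0)
    (ha : L ∘ₗ mulRight k x ∘ₗ (ι : R →ₗ[k] T) = (ι : R →ₗ[k] T) ∘ₗ mulRight k a) :
    L.lTensor T (comul x) = tensorSquareMap ι (s * 1 ⊗ₜ a) := by
  have h := hx.map_comul_of_right_eq_zero .id hL 1
  rw [ha, map_one, one_mul, Bialgebra.comul_one, one_mul, LinearMap.id_comp] at h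
  exact h.trans (map_coe_comp_mulRight s)

theorem rTensor_comul (hx : HasLinearComul ι x s t w) (hL : L ∘ₗ (ι : R →ₗ[k] T) = 0)
    (ha : L ∘ₗ mulRight k x ∘ₗ (ι : R →ₗ[k] T) = (ι : R →ₗ[k] T) ∘ₗ mulRight k a) :
    L.rTensor T (comul x) = tensorSquareMap ι (t * a ⊗ₜ 1) := by
  have h := hx.map_comul_of_left_eq_zero .id hL 1
  rw [ha, map_one, one_mul, Bialgebra.comul_one, one_mul, LinearMap.id_comp] at h
  exact h.trans (map_comp_mulRight_coe t)

theorem exists_comul_eq (hx : HasLinearComul ι x s t w) (hp : IsLinearCoeff ι x p) :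
    ∃ a b : R, comul a = s * 1 ⊗ₜ[k] a ∧ comul b = t * b ⊗ₜ[k] 1 ∧
      t * a ⊗ₜ[k] 1 = s * 1 ⊗ₜ[k] b ∧ counit (R := k) a = 1 ∧ counit (R := k) b = 1 := by
  set f : T →ₗ[k] k := counit ∘ₗ p with hf
  set a := TensorProduct.rid k R (counit.lTensor R s)
  set b := TensorProduct.lid k R (counit.rTensor R t)
  have hfx : f x = 1 := by
    have hpx : p x = 1 := by simpa using hp.map_base_mul 1
    rw [hf, LinearMap.comp_apply, hpx, Bialgebra.counit_one]
  have hfι : f ∘ₗ (ι : R →ₗ[k] T) = 0 := by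
    rw [hf, LinearMap.comp_assoc, hp.comp_eq_zero, LinearMap.comp_zero]
  have hax : leftHit f x = ι a := by simpa using hx.leftHit_base_mul hp 1
  have hbx : rightHit f x = ι b := by simpa using hx.rightHit_base_mul hp 1
  have haι : leftHit f ∘ₗ mulRight k x ∘ₗ (ι : R →ₗ[k] T) = (ι : R →ₗ[k] T) ∘ₗ mulRight k a :=
    LinearMap.ext (hx.leftHit_base_mul hp)
  have hbι : rightHit f ∘ₗ mulRight k x ∘ₗ (ι : R →ₗ[k] T) = (ι : R →ₗ[k] T) ∘ₗ mulRight k b :=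
    LinearMap.ext (hx.rightHit_base_mul hp)
  have ha0 := leftHit_comp_coe hfι
  have hb0 := rightHit_comp_coe hfι
  refine ⟨a, b, hp.tensorSquareMap_injective ?_, hp.tensorSquareMap_injective ?_,
    hp.tensorSquareMap_injective ?_, ?_, ?_⟩
  · rw [tensorSquareMap_comul, ← hax, comul_leftHit]
    exact hx.lTensor_comul ha0 haι
  · rw [tensorSquareMap_comul, ← hbx, comul_rightHit]
    exact hx.rTensor_comul hb0 hbι
  · rw [← hx.rTensor_comul ha0 haι, ← hx.lTensor_comul hb0 hbι, rTensor_leftHit_comul]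
  · rw [← CoalgHomClass.counit_comp_apply ι a, ← hax, counit_leftHit, hfx]
  · rw [← CoalgHomClass.counit_comp_apply ι b, ← hbx, counit_rightHit, hfx]

end HasLinearComul

end Bialgebra

section HopfAlgebra

open WithConv

variable {k R T : Type*} [CommSemiring k] [Semiring R] [Semiring T] [HopfAlgebra k R]
  [HopfAlgebra k T] {ι : R →ₐc[k] T} {x : T} {s t w : R ⊗[k] R} {p : T →ₗ[k] R} {a : R}

theorem HasLinearComul.antipode_convMul_base_mul (hx : HasLinearComul ι x s t w)
    (hp : IsLinearCoeff ι x p) (r : R) :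
    mul' k T (TensorProduct.map (antipode k) ((ι : R →ₗ[k] T) ∘ₗ p) (comul (ι r * x))) =
      counit (R := k) r • ι (mul' k R ((antipode k).rTensor R s)) := by
  have hq : ((ι : R →ₗ[k] T) ∘ₗ p) ∘ₗ (ι : R →ₗ[k] T) = 0 := by
    rw [LinearMap.comp_assoc, hp.comp_eq_zero, LinearMap.comp_zero]
  have hS (z : R ⊗[k] R) : TensorProduct.map (antipode k ∘ₗ (ι : R →ₗ[k] T)) (ι : R →ₗ[k] T) z =
      (antipode k).rTensor T (TensorProduct.map (ι : R →ₗ[k] T) (ι : R →ₗ[k] T) z) := by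
    rw [rTensor, TensorProduct.map_map, LinearMap.id_comp]
  rw [hx.map_comul_of_right_eq_zero _ hq, LinearMap.comp_assoc _ p, hp.comp_mulRight,
    LinearMap.comp_id, hS, mul'_rTensor_antipode_map, mul'_rTensor_antipode_comul_mul, map_smul]

theorem HasLinearComul.isUnit_of_comul_eq (hx : HasLinearComul ι x s t w)
    (hp : IsLinearCoeff ι x p) (ha : comul a = s * 1 ⊗ₜ[k] a) (hε : counit (R := k) a = 1) :
    IsUnit a := by
  set c := mul' k R ((antipode k).rTensor R s)
  have hca : c * a = 1 := by
    rw [← mul'_rTensor_mul_one_tmul, ← ha, mul_antipode_rTensor_comul_apply, hε, map_one]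
  have has : TensorProduct.rid k R (counit.lTensor R s) = a := by
    have h := rid_lTensor_counit_mul s (1 ⊗ₜ[k] a)
    rw [← ha] at h
    simpa [hε] using h.symm
  set q := (ι : R →ₗ[k] T) ∘ₗ p with hq
  have hqι : q ∘ₗ (ι : R →ₗ[k] T) = 0 := by
    rw [hq, LinearMap.comp_assoc, hp.comp_eq_zero, LinearMap.comp_zero]
  set N := (toConv (antipode k) * toConv q).ofConv with hN
  have hNι : N ∘ₗ (ι : R →ₗ[k] T) = 0 := by
    ext r
    change mul' k T (TensorProduct.map (antipode k) q (comul (ι r))) = 0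
    rw [← tensorSquareMap_comul, map_tensorSquareMap, hqι, TensorProduct.map_zero_right,
      LinearMap.zero_apply, map_zero]
  have hNx : N ∘ₗ mulRight k x ∘ₗ (ι : R →ₗ[k] T) = counit.smulRight (ι c) :=
    LinearMap.ext (hx.antipode_convMul_base_mul hp)
  have hidN : toConv .id * toConv N = toConv q := by
    rw [hN, toConv_ofConv, ← mul_assoc, id_mul_antipode, one_mul]
  have hac : ι (a * c) = ι 1 := by
    calc ι (a * c)
        = mul' k T (TensorProduct.map .id N (comul x)) := by
          have h := hx.map_comul_of_right_eq_zero .id hNι 1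
          rw [map_one, one_mul, Bialgebra.comul_one, one_mul, hNx, LinearMap.id_comp] at h
          rw [h, mul'_map_smulRight, has, map_mul]
          rfl
      _ = q x := congr($hidN x)
      _ = ι 1 := by
        have hpx : p x = 1 := by simpa using hp.map_base_mul 1
        rw [hq, LinearMap.comp_apply, hpx]; rfl
  exact ⟨⟨a, c, hp.injective hac, hca⟩, rfl⟩

theorem HasLinearComul.exists_units (hx : HasLinearComul ι x s t w)
    (hp : IsLinearCoeff ι x p) :
    ∃ (u : Rˣ) (g : GroupLike k R), comul (u : R) * s = (↑g⁻¹ : R) ⊗ₜ[k] (u : R) ∧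
      comul (u : R) * t = (u : R) ⊗ₜ[k] 1 := by
  obtain ⟨a, b, ha, hb, hab, hεa, hεb⟩ := hx.exists_comul_eq hp
  obtain ⟨a, rfl⟩ := hx.isUnit_of_comul_eq hp ha hεa
  let g : GroupLike k R := ⟨↑a⁻¹ * b, isGroupLikeElem_inv_mul ha hb hab hεa hεb⟩
  set u : Rˣ := (a * GroupLike.toUnits k g)⁻¹ with hu
  have hub : (↑u⁻¹ : R) = b := by
    rw [hu, inv_inv]
    exact Units.mul_inv_cancel_left a b
  have hua : (u : R) * a = ↑g⁻¹ := by
    rw [← Units.val_mul, hu, mul_inv_rev, inv_mul_cancel_right]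
    rfl
  rw [← hub] at hb hab
  exact ⟨u, g, by rw [comul_unit_mul_eq_tmul hb hab, hua], comul_unit_mul_of_comul_inv hb⟩

end HopfAlgebra

end LinearComul

section ChangeOfVariable

open TensorProduct Coalgebra HopfAlgebra LinearMap

variable {k R T : Type*} [CommSemiring k] [Ring R] [Ring T] [HopfAlgebra k R] [HopfAlgebra k T]
  {ι : R →ₐc[k] T} {x y : T} {s t w : R ⊗[k] R} {p : T →ₗ[k] R}

theorem HasLinearComul.comul_base_mul_add (hx : HasLinearComul ι x s t w) {u h : R}
    (hs : comul u * s = h ⊗ₜ[k] u) (ht : comul u * t = u ⊗ₜ[k] 1) (v : R) :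
    comul (ι u * x + ι v) = ι h ⊗ₜ[k] (ι u * x + ι v) + (ι u * x + ι v) ⊗ₜ[k] 1 +
      tensorSquareMap ι (comul u * w + comul v - h ⊗ₜ[k] v - v ⊗ₜ[k] 1) := by
  rw [map_add, hx.comul_base_mul, hs, ht, ← tensorSquareMap_comul]
  simp only [map_add, map_sub, Algebra.TensorProduct.map_tmul, map_one,
    Algebra.TensorProduct.tmul_mul_tmul, mul_one, tmul_add, add_tmul, BialgHom.coe_toAlgHom]
  abel

theorem HasLinearComul.exists_change_of_variable (hx : HasLinearComul ι x s t w)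
    (hp : IsLinearCoeff ι x p) :
    ∃ (u : Rˣ) (v : R) (β : GroupLike k R) (w' : R ⊗[k] R),
      counit (R := k) (ι u * x + ι v) = 0 ∧
      comul (ι u * x + ι v) = ι ↑β⁻¹ ⊗ₜ[k] (ι u * x + ι v) + (ι u * x + ι v) ⊗ₜ[k] 1 +
        tensorSquareMap ι w' := by
  obtain ⟨u, β, hs, ht⟩ := hx.exists_units hp
  set c : R := algebraMap k R (counit (ι u * x)) with hc
  have hε : counit (ι u * x + ι (-c)) = (0 : k) := by
    calc counit (ι u * x + ι (-c))
        = counit (R := k) c + counit (R := k) (-c) := by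
          rw [map_add, CoalgHomClass.counit_comp_apply ι (-c), hc, Bialgebra.counit_algebraMap]
      _ = 0 := by rw [← map_add, add_neg_cancel, map_zero]
  exact ⟨u, -c, β, _, hε, hx.comul_base_mul_add hs ht (-c)⟩

theorem antipode_eq_and_mul_mul'_eq_of_comul_eq (hι : Function.Injective ι) {β : GroupLike k R}
    (hε : counit (R := k) y = 0)
    (hy : comul y = ι ↑β⁻¹ ⊗ₜ[k] y + y ⊗ₜ[k] 1 + tensorSquareMap ι w) :
    antipode k y = -(ι β * (y + ι (mul' k R ((antipode k).lTensor R w)))) ∧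
      β * mul' k R ((antipode k).lTensor R w) = mul' k R ((antipode k).rTensor R w) := by
  let g : GroupLike k T := ⟨ι β, β.2.map ι⟩
  have hg : (↑g⁻¹ : T) = ι ↑β⁻¹ := (map_antipode ι β).symm
  rw [← hg] at hy
  refine ⟨?_, hι ?_⟩
  · rw [antipode_eq_neg_mul_add hy hε, ← mul'_lTensor_antipode_map]
    rfl
  · rw [map_mul, ← mul'_lTensor_antipode_map, ← mul'_rTensor_antipode_map]
    exact mul_mul'_lTensor_antipode hy hε

end ChangeOfVariable

section HopfAlgebraStructure

variable {k R T : Type*} [Field k] [Ring R] [HopfAlgebra k R] [Ring T] [Algebra k T]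

/-- The data `H` as an instance of Mathlib's class `HopfAlgebra`, whose theory then applies to
`T`. -/
@[reducible]
noncomputable def HopfAlgebraStructure.toHopfAlgebra (H : HopfAlgebraStructure k T) :
    HopfAlgebra k T where
  comul := H.comul
  counit := H.counit
  antipode := H.antipode
  coassoc := by
    ext t
    exact (LinearEquiv.eq_symm_apply _).mp (H.coassoc t)
  rTensor_counit_comp_comul := by
    ext t
    exact (LinearEquiv.eq_symm_apply _).mpr (H.counit_comul t)
  lTensor_counit_comp_comul := by
    ext t
    exact (LinearEquiv.eq_symm_apply _).mpr (H.comul_counit t)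
  counit_one := H.counit_one
  mul_compr₂_counit := by
    ext a b
    exact H.counit_mul a b
  comul_one := H.comul_one
  mul_compr₂_comul := by
    ext a b
    exact H.comul_mul a b
  mul_antipode_rTensor_comul := LinearMap.ext H.antipode_mul_id
  mul_antipode_lTensor_comul := LinearMap.ext H.id_mul_antipode

/-- The inclusion `ι` as a homomorphism of bialgebras, for the structure `H` on `T`. -/
noncomputable def ExtendsHopf.toBialgHom {ι : R →ₐ[k] T} {H : HopfAlgebraStructure k T}
    (hH : ExtendsHopf k ι H) : letI := H.toHopfAlgebra; R →ₐc[k] T :=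
  letI := H.toHopfAlgebra
  BialgHom.ofAlgHom ι (AlgHom.ext hH.1) (AlgHom.ext fun r ↦ (hH.2.1 r).symm)

theorem IsOreExtension.exists_isLinearCoeff {σ : R ≃ₐ[k] R} {δ : R →ₗ[k] R} {ι : R →ₐ[k] T} {x : T}
    (hT : IsOreExtension k σ δ ι x) : ∃ p : T →ₗ[k] R, IsLinearCoeff ι x p := by
  obtain ⟨p, hp⟩ := hT.exists_coeff 1
  exact ⟨p, fun r ↦ by simpa using hp 0 r, fun r ↦ by simpa using hp 1 r⟩

end HopfAlgebraStructure

theorem stmt3_general {k R T : Type*} [Field k] [Ring R] [HopfAlgebra k R] [Ring T] [Algebra k T]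
    (σ : R ≃ₐ[k] R) (δ : R →ₗ[k] R) (ι : R →ₐ[k] T) (x : T)
    (hT : IsOreExtension k σ δ ι x)
    (H : HopfAlgebraStructure k T) (hH : ExtendsHopf k ι H)
    (s t w : R ⊗[k] R)
    (hx : H.comul x
        = TensorProduct.map ι.toLinearMap ι.toLinearMap s * ((1 : T) ⊗ₜ[k] x)
          + TensorProduct.map ι.toLinearMap ι.toLinearMap t * (x ⊗ₜ[k] (1 : T))
          + TensorProduct.map ι.toLinearMap ι.toLinearMap w) :
    ∃ (y : T) (σ' : R ≃ₐ[k] R) (δ' : R →ₗ[k] R),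
      IsOreExtension k σ' δ' ι y ∧
      ∃ (β βi : R) (w' : R ⊗[k] R),
        β * βi = 1 ∧ βi * β = 1 ∧
        Coalgebra.comul β = β ⊗ₜ[k] β ∧ Coalgebra.counit (R := k) β = 1 ∧
        H.comul y = ι βi ⊗ₜ[k] y + y ⊗ₜ[k] 1
            + TensorProduct.map ι.toLinearMap ι.toLinearMap w' ∧
        H.antipode y = -(ι β * (y + ι (LinearMap.mul' k R
            (TensorProduct.map (LinearMap.id : R →ₗ[k] R)
              (HopfAlgebra.antipode (R := k)) w')))) ∧
        β * LinearMap.mul' k R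
            (TensorProduct.map (LinearMap.id : R →ₗ[k] R)
              (HopfAlgebra.antipode (R := k)) w')
          = LinearMap.mul' k R
            (TensorProduct.map (HopfAlgebra.antipode (R := k))
              (LinearMap.id : R →ₗ[k] R) w') := by
  let _ : HopfAlgebra k T := H.toHopfAlgebra
  obtain ⟨p, hp⟩ := hT.exists_isLinearCoeff
  have hx' : HasLinearComul hH.toBialgHom x s t w := hx
  have hp' : IsLinearCoeff hH.toBialgHom x p := hp
  obtain ⟨u, v, β, w', hε, hy⟩ := hx'.exists_change_of_variable hp'
  obtain ⟨σ', δ', hT'⟩ := hT.unit_mul_add u v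
  obtain ⟨hS, hβ⟩ := antipode_eq_and_mul_mul'_eq_of_comul_eq hp'.injective hε hy
  exact ⟨ι u * x + ι v, σ', δ', hT', β, ↑β⁻¹, w', β.2.mul_antipode_cancel,
    β.2.antipode_mul_cancel, β.2.comul_eq_tmul_self, β.2.counit_eq_one, hy, hS, hβ⟩

/-- **Lemma 2.2.** Let `R` be a noetherian Hopf `k`-algebra with `R ⊗ₖ R` a domain, suppose
`T = R[x; σ, δ]` admits a Hopf algebra structure with `R` a Hopf subalgebra and that
`Δ(x) = s(1 ⊗ x) + t(x ⊗ 1) + w` with `s, t, w ∈ R ⊗ₖ R`.  Then after a change of the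
variable `x` one may assume `Δ(x) = β⁻¹ ⊗ x + x ⊗ 1 + w'` with `β ∈ R` grouplike and
`w' ∈ R ⊗ₖ R`; moreover `S(x) = -β(x + ∑ w'₁S(w'₂))` and `β·(∑ w'₁S(w'₂)) = ∑ S(w'₁)w'₂`. -/
theorem stmt3 {k R T : Type*} [Field k] [Ring R] [HopfAlgebra k R]
    [IsNoetherianRing R] [IsDomain (R ⊗[k] R)] [Ring T] [Algebra k T]
    (σ : R ≃ₐ[k] R) (δ : R →ₗ[k] R) (ι : R →ₐ[k] T) (x : T)
    (hT : IsOreExtension k σ δ ι x)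
    (H : HopfAlgebraStructure k T) (hH : ExtendsHopf k ι H)
    (s t w : R ⊗[k] R)
    (hx : H.comul x
        = TensorProduct.map ι.toLinearMap ι.toLinearMap s * ((1 : T) ⊗ₜ[k] x)
          + TensorProduct.map ι.toLinearMap ι.toLinearMap t * (x ⊗ₜ[k] (1 : T))
          + TensorProduct.map ι.toLinearMap ι.toLinearMap w) :
    ∃ (y : T) (σ' : R ≃ₐ[k] R) (δ' : R →ₗ[k] R),
      IsOreExtension k σ' δ' ι y ∧
      ∃ (β βi : R) (w' : R ⊗[k] R),
        β * βi = 1 ∧ βi * β = 1 ∧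
        Coalgebra.comul β = β ⊗ₜ[k] β ∧ Coalgebra.counit (R := k) β = 1 ∧
        H.comul y = ι βi ⊗ₜ[k] y + y ⊗ₜ[k] 1
            + TensorProduct.map ι.toLinearMap ι.toLinearMap w' ∧
        H.antipode y = -(ι β * (y + ι (LinearMap.mul' k R
            (TensorProduct.map (LinearMap.id : R →ₗ[k] R)
              (HopfAlgebra.antipode (R := k)) w')))) ∧
        β * LinearMap.mul' k R
            (TensorProduct.map (LinearMap.id : R →ₗ[k] R)
              (HopfAlgebra.antipode (R := k)) w')
          = LinearMap.mul' k R
            (TensorProduct.map (HopfAlgebra.antipode (R := k))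
              (LinearMap.id : R →ₗ[k] R) w') :=
  stmt3_general σ δ ι x hT H hH s t w hx
end

section
/- Let k be a field, let R be a noetherian Hopf k-algebra such that R⊗_k R is a domain, and suppose the Ore extension T=R[x;σ,δ] admits a Hopf algebra structure extending that of R. Then after a change of the variable x, Δ(x) = β^{-1}⊗x + x⊗1 + w where β is a grouplike element of R and w ∈ R⊗_k R. In particular, the condition that Δ(x) have the form a⊗x + x⊗b + v(x⊗x) + w with a,b ∈ R and v,w ∈ R⊗_k R follows automatically from T being a Hopf algebra containing R as a Hopf subalgebra. -/
open scoped TensorProduct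

/-!
`T ⊗ S` is an Ore extension of `R ⊗ S` with variable `x ⊗ 1`, so elements of `T ⊗ T` have a degree
in each tensor factor. If `Δ(x)` has degree `n` in one factor, then `Δ(t)` has degree `n · deg t`
in that factor, since `R ⊗ T` is a domain. Slicing the other factor of `Δ(x)` with a linear form
can produce some `t` of degree at least `n`, while coassociativity bounds the degree of `Δ(t)` by
`n`; hence `n² ≤ n` and `Δ(x) = c₀₀ + c₀₁(1 ⊗ x) + c₁₀(x ⊗ 1) + c₁₁(x ⊗ x)` with `cᵢⱼ ∈ R ⊗ R`.

Slicing coassociativity with `ε ∘ (coefficient of x)` gives the relations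
`cᵢ₁(1 ⊗ (ε ⊗ id)c₁ⱼ) = c₁ⱼ((id ⊗ ε)cᵢ₁ ⊗ 1)`. If `c₁₁ ≠ 0`, completing the product
brings a nonzero scalar multiple of `Δ(x)` to the form `c₁₁(y ⊗ z) + w` with `z` of degree one and
`w ∈ R ⊗ R`, and the antipode axiom exhibits a nonzero left multiple of `z` lying in `R`, which is
absurd. With `c₁₁ = 0` the same relations and the antipode show that `a = (ε ⊗ id)c₁₀` and
`b = (id ⊗ ε)c₀₁` are units, that `β = b⁻¹a` is grouplike, and that `a⁻¹x` is the required variable.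
-/

namespace IsOreExtension

section NormalForm

open Polynomial

variable {k R T : Type*} [Field k] [Ring R] [Algebra k R] [Ring T] [Algebra k T]
  {σ : R ≃ₐ[k] R} {δ : R →ₗ[k] R} {ι : R →ₐ[k] T} {x : T}

theorem free_iff_bijective_eval₂ (ι : R →ₐ[k] T) (x : T) :
    (∀ t : T, ∃! a : ℕ →₀ R, t = a.sum fun i r => ι r * x ^ i) ↔
      Function.Bijective (eval₂ (ι : R →+* T) x) := by
  let e : R[X] ≃ (ℕ →₀ R) :=
    (toFinsuppIsoLinear R ≪≫ₗ AddMonoidAlgebra.coeffLinearEquiv R).toEquiv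
  have eval₂_eq (p : R[X]) : eval₂ (ι : R →+* T) x p = (e p).sum fun i r => ι r * x ^ i :=
    eval₂_eq_sum
  have eval₂_comp : eval₂ (ι : R →+* T) x =
      (fun a : ℕ →₀ R => a.sum fun i r => ι r * x ^ i) ∘ e := funext eval₂_eq
  rw [eval₂_comp, Function.Bijective.of_comp_iff _ e.bijective,
    Function.bijective_iff_existsUnique]
  simp only [eq_comm]

/-- The inverse of `Polynomial.eval₂ ι x`: writes `t = ∑ ι (aᵢ) xⁱ` in left normal form and records
the coefficients `aᵢ` as a polynomial. It is left `R`-linear but not multiplicative. -/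
noncomputable def toPolynomial (hT : IsOreExtension k σ δ ι x) : T ≃ₗ[k] R[X] :=
  (LinearEquiv.ofBijective
    { toFun := eval₂ (ι : R →+* T) x
      map_add' := fun _ _ => eval₂_add _ _
      map_smul' := fun c p => by
        rw [← algebraMap_smul R c p, eval₂_smul, RingHom.id_apply, Algebra.smul_def c]
        simp only [AlgHom.coe_toRingHom, AlgHom.commutes] }
    ((free_iff_bijective_eval₂ ι x).mp hT.free)).symm

theorem eval₂_toPolynomial (hT : IsOreExtension k σ δ ι x) (t : T) :
    eval₂ (ι : R →+* T) x (hT.toPolynomial t) = t :=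
  hT.toPolynomial.symm_apply_apply t

theorem toPolynomial_eval₂ (hT : IsOreExtension k σ δ ι x) (p : R[X]) :
    hT.toPolynomial (eval₂ (ι : R →+* T) x p) = p :=
  hT.toPolynomial.apply_symm_apply p

theorem toPolynomial_map_mul_pow (hT : IsOreExtension k σ δ ι x) (r : R) (i : ℕ) :
    hT.toPolynomial (ι r * x ^ i) = monomial i r := by
  rw [← hT.toPolynomial_eval₂ (monomial i r), eval₂_monomial, AlgHom.coe_toRingHom]

theorem toPolynomial_map_mul (hT : IsOreExtension k σ δ ι x) (r : R) (t : T) :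
    hT.toPolynomial (ι r * t) = r • hT.toPolynomial t := by
  rw [← hT.toPolynomial_eval₂ (r • hT.toPolynomial t), eval₂_smul, hT.eval₂_toPolynomial,
    AlgHom.coe_toRingHom]

theorem linearMap_ext (hT : IsOreExtension k σ δ ι x) {M : Type*} [AddCommMonoid M] [Module k M]
    {f g : T →ₗ[k] M} (h : ∀ r i, f (ι r * x ^ i) = g (ι r * x ^ i)) : f = g := by
  have comp_eq : f ∘ₗ hT.toPolynomial.symm.toLinearMap = g ∘ₗ hT.toPolynomial.symm.toLinearMap := by
    ext p
    induction p using Polynomial.induction_on' with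
    | add p q hp hq => simp only [map_add, hp, hq]
    | monomial i r =>
      have symm_monomial : hT.toPolynomial.symm (monomial i r) = ι r * x ^ i := by
        rw [← hT.toPolynomial_map_mul_pow, LinearEquiv.symm_apply_apply]
      simpa only [LinearMap.comp_apply, LinearEquiv.coe_coe, symm_monomial] using h r i
  exact LinearEquiv.eq_comp_toLinearMap_iff .. |>.mp comp_eq

/-- The coefficient of `xⁱ` in the left normal form of an element of `R[x; σ, δ]`. -/
noncomputable def coeff (hT : IsOreExtension k σ δ ι x) (i : ℕ) : T →ₗ[k] R :=
  (lcoeff R i).restrictScalars k ∘ₗ hT.toPolynomial.toLinearMap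

/-- The degree in `x`; as for polynomials, the degree of `0` is `0`. -/
noncomputable def natDegree (hT : IsOreExtension k σ δ ι x) (t : T) : ℕ :=
  (hT.toPolynomial t).natDegree

theorem coeff_map_mul_pow (hT : IsOreExtension k σ δ ι x) (r : R) (i j : ℕ) :
    hT.coeff j (ι r * x ^ i) = if i = j then r else 0 := by
  simp only [coeff, LinearMap.comp_apply, LinearEquiv.coe_coe, hT.toPolynomial_map_mul_pow,
    LinearMap.restrictScalars_apply, lcoeff_apply, coeff_monomial]

theorem coeff_map_mul (hT : IsOreExtension k σ δ ι x) (i : ℕ) (r : R) (t : T) :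
    hT.coeff i (ι r * t) = r * hT.coeff i t := by
  simp only [coeff, LinearMap.comp_apply, LinearEquiv.coe_coe, hT.toPolynomial_map_mul,
    LinearMap.restrictScalars_apply, lcoeff_apply, coeff_smul, smul_eq_mul]

theorem coeff_map (hT : IsOreExtension k σ δ ι x) (i : ℕ) (r : R) :
    hT.coeff i (ι r) = if 0 = i then r else 0 := by
  simpa only [pow_zero, mul_one] using hT.coeff_map_mul_pow r 0 i

theorem coeff_self (hT : IsOreExtension k σ δ ι x) (i : ℕ) :
    hT.coeff i x = if 1 = i then 1 else 0 := by
  simpa only [map_one, one_mul, pow_one] using hT.coeff_map_mul_pow 1 1 i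

theorem coeff_self_mul_succ (hT : IsOreExtension k σ δ ι x) (i : ℕ) (t : T) :
    hT.coeff (i + 1) (x * t) = σ (hT.coeff i t) + δ (hT.coeff (i + 1) t) := by
  suffices hT.coeff (i + 1) ∘ₗ LinearMap.mulLeft k x =
      σ.toLinearMap ∘ₗ hT.coeff i + δ ∘ₗ hT.coeff (i + 1) from LinearMap.congr_fun this t
  refine hT.linearMap_ext fun r j => ?_
  have normal_form : x * (ι r * x ^ j) = ι (σ r) * x ^ (j + 1) + ι (δ r) * x ^ j := by
    rw [← mul_assoc, hT.rel, add_mul, mul_assoc, ← pow_succ']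
  simp only [LinearMap.comp_apply, LinearMap.mulLeft_apply, normal_form, map_add,
    coeff_map_mul_pow, LinearMap.add_apply, AlgEquiv.toLinearMap_apply, apply_ite σ, apply_ite δ,
    map_zero, Nat.add_right_cancel_iff]

theorem natDegree_le_iff (hT : IsOreExtension k σ δ ι x) {t : T} {n : ℕ} :
    hT.natDegree t ≤ n ↔ ∀ i, n < i → hT.coeff i t = 0 :=
  natDegree_le_iff_coeff_eq_zero

theorem le_natDegree_of_ne_zero (hT : IsOreExtension k σ δ ι x) {t : T} {n : ℕ}
    (h : hT.coeff n t ≠ 0) : n ≤ hT.natDegree t :=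
  Polynomial.le_natDegree_of_ne_zero h

theorem coeff_natDegree_ne_zero (hT : IsOreExtension k σ δ ι x) {t : T} (ht : t ≠ 0) :
    hT.coeff (hT.natDegree t) t ≠ 0 :=
  leadingCoeff_ne_zero.mpr (hT.toPolynomial.map_ne_zero_iff.mpr ht)

theorem natDegree_map (hT : IsOreExtension k σ δ ι x) (r : R) : hT.natDegree (ι r) = 0 :=
  Nat.le_zero.mp <| hT.natDegree_le_iff.mpr fun i hi => by rw [hT.coeff_map, if_neg hi.ne]

theorem natDegree_self [Nontrivial R] (hT : IsOreExtension k σ δ ι x) : hT.natDegree x = 1 :=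
  le_antisymm (hT.natDegree_le_iff.mpr fun i hi => by rw [hT.coeff_self, if_neg hi.ne])
    (hT.le_natDegree_of_ne_zero (by rw [hT.coeff_self, if_pos rfl]; exact one_ne_zero))

theorem eq_sum_range (hT : IsOreExtension k σ δ ι x) {t : T} {n : ℕ} (ht : hT.natDegree t < n) :
    t = ∑ i ∈ Finset.range n, ι (hT.coeff i t) * x ^ i := by
  conv_lhs => rw [← hT.eval₂_toPolynomial t]
  exact eval₂_eq_sum_range' _ ht x

theorem map_coeff_zero_map (hT : IsOreExtension k σ δ ι x) (z : R ⊗[k] R) :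
    TensorProduct.map (hT.coeff 0) (hT.coeff 0) (Algebra.TensorProduct.map ι ι z) = z := by
  induction z with
  | zero => simp only [map_zero]
  | add z z' hz hz' => rw [map_add, map_add, hz, hz']
  | tmul r s =>
    rw [Algebra.TensorProduct.map_tmul, TensorProduct.map_tmul, hT.coeff_map, hT.coeff_map,
      if_pos rfl, if_pos rfl]

end NormalForm

section Degree

open Polynomial

variable {k R T : Type*} [Field k] [Ring R] [Algebra k R] [Ring T] [Algebra k T]
  {σ : R ≃ₐ[k] R} {δ : R →ₗ[k] R} {ι : R →ₐ[k] T} {x : T}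

theorem natDegree_sum_le (hT : IsOreExtension k σ δ ι x) {α : Type*} (s : Finset α) {f : α → T}
    {n : ℕ} (h : ∀ a ∈ s, hT.natDegree (f a) ≤ n) : hT.natDegree (∑ a ∈ s, f a) ≤ n := by
  refine hT.natDegree_le_iff.mpr fun i hi => ?_
  rw [map_sum]
  exact Finset.sum_eq_zero fun a ha => hT.natDegree_le_iff.mp (h a ha) i hi

theorem natDegree_map_mul_le (hT : IsOreExtension k σ δ ι x) (r : R) (t : T) :
    hT.natDegree (ι r * t) ≤ hT.natDegree t :=
  hT.natDegree_le_iff.mpr fun i hi => by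
    rw [coeff_map_mul, hT.natDegree_le_iff.mp le_rfl i hi, mul_zero]

theorem natDegree_pow_self_mul_le (hT : IsOreExtension k σ δ ι x) (m : ℕ) (t : T) :
    hT.natDegree (x ^ m * t) ≤ m + hT.natDegree t := by
  induction m with
  | zero => rw [pow_zero, one_mul, zero_add]
  | succ m ih =>
    refine hT.natDegree_le_iff.mpr fun i hi => ?_
    obtain ⟨i, rfl⟩ := Nat.exists_eq_add_one_of_ne_zero (by lia : i ≠ 0)
    have coeff_eq_zero := hT.natDegree_le_iff.mp ih
    rw [pow_succ', mul_assoc, coeff_self_mul_succ, coeff_eq_zero i (by lia),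
      coeff_eq_zero (i + 1) (by lia), map_zero, map_zero, add_zero]

theorem coeff_pow_self_mul (hT : IsOreExtension k σ δ ι x) (m : ℕ) (t : T) :
    hT.coeff (m + hT.natDegree t) (x ^ m * t) = (σ ^ m) (hT.coeff (hT.natDegree t) t) := by
  induction m with
  | zero => rw [pow_zero, one_mul, zero_add, pow_zero, AlgEquiv.one_apply]
  | succ m ih =>
    have coeff_succ : hT.coeff (m + hT.natDegree t + 1) (x ^ m * t) = 0 :=
      hT.natDegree_le_iff.mp (hT.natDegree_pow_self_mul_le m t) _ (Nat.lt_succ_self _)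
    rw [add_right_comm, pow_succ' x, mul_assoc, coeff_self_mul_succ, coeff_succ, map_zero, add_zero,
      ih, pow_succ' σ, AlgEquiv.mul_apply]

theorem mul_eq_sum (hT : IsOreExtension k σ δ ι x) (f g : T) :
    f * g = ∑ i ∈ Finset.range (hT.natDegree f + 1), ι (hT.coeff i f) * (x ^ i * g) := by
  conv_lhs => rw [hT.eq_sum_range (Nat.lt_succ_self (hT.natDegree f)), Finset.sum_mul]
  simp only [mul_assoc]

theorem natDegree_mul_le (hT : IsOreExtension k σ δ ι x) (f g : T) :
    hT.natDegree (f * g) ≤ hT.natDegree f + hT.natDegree g := by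
  rw [hT.mul_eq_sum f g]
  refine hT.natDegree_sum_le _ fun i hi => ?_
  calc hT.natDegree (ι (hT.coeff i f) * (x ^ i * g))
      ≤ hT.natDegree (x ^ i * g) := hT.natDegree_map_mul_le _ _
    _ ≤ i + hT.natDegree g := hT.natDegree_pow_self_mul_le i g
    _ ≤ hT.natDegree f + hT.natDegree g :=
        Nat.add_le_add_right (Nat.lt_succ_iff.mp (Finset.mem_range.mp hi)) _

theorem coeff_mul_natDegree_add (hT : IsOreExtension k σ δ ι x) (f g : T) :
    hT.coeff (hT.natDegree f + hT.natDegree g) (f * g) =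
      hT.coeff (hT.natDegree f) f *
        (σ ^ hT.natDegree f) (hT.coeff (hT.natDegree g) g) := by
  rw [hT.mul_eq_sum f g, map_sum, Finset.sum_range_succ, Finset.sum_eq_zero, zero_add,
    coeff_map_mul, coeff_pow_self_mul]
  intro i hi
  have lower : i + hT.natDegree g < hT.natDegree f + hT.natDegree g :=
    Nat.add_lt_add_right (Finset.mem_range.mp hi) _
  rw [coeff_map_mul, hT.natDegree_le_iff.mp (hT.natDegree_pow_self_mul_le i g) _ lower, mul_zero]

variable [IsDomain R]

theorem coeff_mul_natDegree_add_ne_zero (hT : IsOreExtension k σ δ ι x) {f g : T} (hf : f ≠ 0)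
    (hg : g ≠ 0) : hT.coeff (hT.natDegree f + hT.natDegree g) (f * g) ≠ 0 := by
  rw [coeff_mul_natDegree_add]
  exact mul_ne_zero (hT.coeff_natDegree_ne_zero hf)
    ((map_ne_zero_iff _ (σ ^ hT.natDegree f).injective).mpr (hT.coeff_natDegree_ne_zero hg))

theorem isDomain (hT : IsOreExtension k σ δ ι x) : IsDomain T :=
  have : Nontrivial T := hT.injective.nontrivial
  have : NoZeroDivisors T :=
    ⟨fun {f g} hfg => by
      by_contra! hne
      exact hT.coeff_mul_natDegree_add_ne_zero hne.1 hne.2 (by rw [hfg, map_zero])⟩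
  NoZeroDivisors.to_isDomain T

theorem natDegree_mul (hT : IsOreExtension k σ δ ι x) {f g : T} (hf : f ≠ 0) (hg : g ≠ 0) :
    hT.natDegree (f * g) = hT.natDegree f + hT.natDegree g :=
  le_antisymm (hT.natDegree_mul_le f g)
    (hT.le_natDegree_of_ne_zero (hT.coeff_mul_natDegree_add_ne_zero hf hg))

theorem natDegree_pow (hT : IsOreExtension k σ δ ι x) (t : T) (n : ℕ) :
    hT.natDegree (t ^ n) = n * hT.natDegree t := by
  have := hT.isDomain
  induction n with
  | zero => rw [pow_zero, zero_mul, ← map_one ι, hT.natDegree_map]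
  | succ n ih =>
    rcases eq_or_ne t 0 with rfl | ht
    · rw [zero_pow n.succ_ne_zero, ← map_zero ι, hT.natDegree_map, mul_zero]
    · rw [pow_succ, hT.natDegree_mul (pow_ne_zero n ht) ht, ih, Nat.succ_mul]

theorem natDegree_eval₂ (hT : IsOreExtension k σ δ ι x) (y : T) (p : R[X]) :
    hT.natDegree (eval₂ (ι : R →+* T) y p) = p.natDegree * hT.natDegree y := by
  have := hT.isDomain
  have term_le (i : ℕ) : hT.natDegree (ι (p.coeff i) * y ^ i) ≤ i * hT.natDegree y :=
    (hT.natDegree_map_mul_le _ _).trans (hT.natDegree_pow y i).le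
  rw [eval₂_eq_sum_range]
  refine le_antisymm (hT.natDegree_sum_le _ fun i hi => (term_le i).trans <|
    Nat.mul_le_mul_right _ (Nat.lt_succ_iff.mp (Finset.mem_range.mp hi))) ?_
  rcases Nat.eq_zero_or_pos (p.natDegree * hT.natDegree y) with h0 | hpos
  · rw [h0]
    exact Nat.zero_le _
  have hp : 0 < p.natDegree := Nat.pos_of_mul_pos_right hpos
  have hy : 0 < hT.natDegree y := Nat.pos_of_mul_pos_left hpos
  have lower (i : ℕ) (hi : i ∈ Finset.range p.natDegree) :
      hT.coeff (p.natDegree * hT.natDegree y) (ι (p.coeff i) * y ^ i) = 0 :=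
    hT.natDegree_le_iff.mp (term_le i) _ (Nat.mul_lt_mul_of_pos_right (Finset.mem_range.mp hi) hy)
  have y_ne_zero : y ≠ 0 := by
    rintro rfl
    rw [← map_zero ι, hT.natDegree_map] at hy
    exact hy.false
  refine hT.le_natDegree_of_ne_zero ?_
  simp only [AlgHom.coe_toRingHom]
  rw [map_sum, Finset.sum_range_succ, Finset.sum_eq_zero lower, zero_add, coeff_map_mul,
    ← hT.natDegree_pow]
  exact mul_ne_zero (leadingCoeff_ne_zero.mpr (ne_zero_of_natDegree_gt hp))
    (hT.coeff_natDegree_ne_zero (pow_ne_zero _ y_ne_zero))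

theorem natDegree_algHom {R₀ T₀ : Type*} [Ring R₀] [Algebra k R₀] [Ring T₀] [Algebra k T₀]
    {σ₀ : R₀ ≃ₐ[k] R₀} {δ₀ : R₀ →ₗ[k] R₀} {ι₀ : R₀ →ₐ[k] T₀} {x₀ : T₀}
    (hT : IsOreExtension k σ δ ι x) (hT₀ : IsOreExtension k σ₀ δ₀ ι₀ x₀)
    {D : T₀ →ₐ[k] T} {d : R₀ →ₐ[k] R} (hd : Function.Injective d)
    (hD : ∀ r, D (ι₀ r) = ι (d r)) (t : T₀) :
    hT.natDegree (D t) = hT₀.natDegree t * hT.natDegree (D x₀) := by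
  have comp_eq : (D : T₀ →+* T).comp (ι₀ : R₀ →+* T₀) = (ι : R →+* T).comp (d : R₀ →+* R) :=
    RingHom.ext hD
  have D_eq : D t = eval₂ (ι : R →+* T) (D x₀) ((hT₀.toPolynomial t).map (d : R₀ →+* R)) := by
    rw [eval₂_map, ← comp_eq, ← AlgHom.coe_toRingHom D, ← hom_eval₂, hT₀.eval₂_toPolynomial]
  rw [D_eq, hT.natDegree_eval₂, natDegree_map_eq_of_injective (f := (d : R₀ →+* R)) hd]
  rfl

end Degree

section ChangeOfVariable

open Polynomial

variable {k R T : Type*} [Field k] [Ring R] [Algebra k R] [Ring T] [Algebra k T]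
  {σ : R ≃ₐ[k] R} {δ : R →ₗ[k] R} {ι : R →ₐ[k] T} {x : T}

theorem map_units_mul_self_mul_map (hT : IsOreExtension k σ δ ι x) (u : Rˣ) (r : R) :
    ι u * x * ι r =
      ι (ConjAct.toConjAct u • σ r) * (ι u * x) + ι (u * δ r) := by
  have cancel : ι ↑u⁻¹ * (ι ↑u * x) = x := by
    rw [← mul_assoc, ← map_mul, Units.inv_mul, map_one, one_mul]
  rw [mul_assoc, hT.rel, mul_add, ConjAct.units_smul_def, ConjAct.ofConjAct_toConjAct, map_mul,
    map_mul, mul_assoc (ι ↑u * ι (σ r)), cancel, mul_assoc, ← map_mul ι (u : R) (δ r)]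

theorem eval₂_map_units_mul_self_surjective (hT : IsOreExtension k σ δ ι x) (u : Rˣ) :
    Function.Surjective (eval₂ (ι : R →+* T) (ι u * x)) := by
  set y := ι u * x with hy
  let N : AddSubgroup T := (eval₂AddMonoidHom (ι : R →+* T) y).range
  have monomial_mem (r : R) (i : ℕ) : ι r * y ^ i ∈ N :=
    ⟨monomial i r, eval₂_monomial _ _⟩
  have map_mul_mem (r : R) {t : T} : t ∈ N → ι r * t ∈ N := by
    rintro ⟨p, rfl⟩
    exact ⟨r • p, eval₂_smul _ _ _⟩
  have y_mul_mem {t : T} : t ∈ N → y * t ∈ N := by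
    rintro ⟨p, rfl⟩
    induction p using Polynomial.induction_on' with
    | add p q hp hq => simpa only [map_add, mul_add] using N.add_mem hp hq
    | monomial i r =>
      rw [eval₂AddMonoidHom_apply, eval₂_monomial, AlgHom.coe_toRingHom, ← mul_assoc, hy,
        hT.map_units_mul_self_mul_map, ← hy, add_mul, mul_assoc, ← pow_succ']
      exact N.add_mem (monomial_mem _ _) (monomial_mem _ _)
  have x_pow_mem (i : ℕ) : x ^ i ∈ N := by
    induction i with
    | zero => simpa using monomial_mem 1 0
    | succ i ih =>
      have x_eq : x = ι ↑u⁻¹ * y := by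
        rw [hy, ← mul_assoc, ← map_mul, Units.inv_mul, map_one, one_mul]
      rw [pow_succ']
      nth_rewrite 1 [x_eq]
      rw [mul_assoc]
      exact map_mul_mem _ (y_mul_mem ih)
  intro t
  change t ∈ N
  rw [hT.eq_sum_range (Nat.lt_succ_self (hT.natDegree t))]
  exact N.sum_mem fun i _ => map_mul_mem _ (x_pow_mem i)

variable [IsDomain R]

theorem eval₂_injective (hT : IsOreExtension k σ δ ι x) {y : T} (hy : hT.natDegree y ≠ 0) :
    Function.Injective (eval₂ (ι : R →+* T) y) := by
  refine (injective_iff_map_eq_zero (eval₂AddMonoidHom (ι : R →+* T) y)).mpr fun p hp => ?_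
  rw [eval₂AddMonoidHom_apply] at hp
  have natDegree_p : p.natDegree = 0 := by
    have h0 := hT.natDegree_eval₂ y p
    rw [hp, ← map_zero ι, hT.natDegree_map] at h0
    exact (Nat.mul_eq_zero.mp h0.symm).resolve_right hy
  rw [eq_C_of_natDegree_eq_zero natDegree_p, eval₂_C] at hp
  rw [eq_C_of_natDegree_eq_zero natDegree_p,
    (injective_iff_map_eq_zero ι).mp hT.injective _ hp, C_0]

theorem natDegree_map_units_mul_self (hT : IsOreExtension k σ δ ι x) (u : Rˣ) :
    hT.natDegree (ι u * x) = 1 := by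
  have ne_zero_of_natDegree {t : T} (ht : hT.natDegree t = 1) : t ≠ 0 := by
    rintro rfl
    rw [← map_zero ι, hT.natDegree_map] at ht
    exact zero_ne_one ht
  rw [hT.natDegree_mul ((map_ne_zero_iff ι hT.injective).mpr u.ne_zero)
    (ne_zero_of_natDegree hT.natDegree_self), hT.natDegree_map, hT.natDegree_self]

theorem units_mul (hT : IsOreExtension k σ δ ι x) (u : Rˣ) :
    IsOreExtension k (σ.trans (MulSemiringAction.toAlgEquiv k R (ConjAct.toConjAct u)))
      (LinearMap.mulLeft k (u : R) ∘ₗ δ) ι (ι u * x) where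
  isSigmaDerivation a b := by
    simp only [LinearMap.comp_apply, LinearMap.mulLeft_apply, AlgEquiv.trans_apply,
      MulSemiringAction.toAlgEquiv_apply, ConjAct.units_smul_def, ConjAct.ofConjAct_toConjAct,
      hT.isSigmaDerivation, mul_add, mul_assoc, Units.inv_mul_cancel_left]
  injective := hT.injective
  rel := hT.map_units_mul_self_mul_map u
  free := (free_iff_bijective_eval₂ ι _).mpr
    ⟨hT.eval₂_injective (hT.natDegree_map_units_mul_self u ▸ one_ne_zero),
      hT.eval₂_map_units_mul_self_surjective u⟩

end ChangeOfVariable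

section TensorRight

open Polynomial

variable {k R T : Type*} [Field k] [Ring R] [Algebra k R] [Ring T] [Algebra k T]
  {σ : R ≃ₐ[k] R} {δ : R →ₗ[k] R} {ι : R →ₐ[k] T} {x : T}
  (S : Type*) [Ring S] [Algebra k S]

theorem rTensor_coeff_map_mul_pow (hT : IsOreExtension k σ δ ι x) (z : R ⊗[k] S) (i j : ℕ) :
    (hT.coeff j).rTensor S
        (Algebra.TensorProduct.map ι (AlgHom.id k S) z * (x ⊗ₜ[k] (1 : S)) ^ i) =
      if i = j then z else 0 := by
  induction z with
  | zero => simp only [map_zero, zero_mul, ite_self]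
  | add z z' hz hz' => rw [map_add, add_mul, map_add, hz, hz', ← ite_add_zero]
  | tmul r s =>
    rw [Algebra.TensorProduct.tmul_pow, Algebra.TensorProduct.map_tmul,
      Algebra.TensorProduct.tmul_mul_tmul, one_pow, mul_one, LinearMap.rTensor_tmul,
      hT.coeff_map_mul_pow, TensorProduct.ite_tmul, AlgHom.id_apply]

theorem eval₂_tmul_one_injective (hT : IsOreExtension k σ δ ι x) :
    Function.Injective (eval₂
      (Algebra.TensorProduct.map ι (AlgHom.id k S) : R ⊗[k] S →+* T ⊗[k] S) (x ⊗ₜ[k] 1)) := by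
  let f : (R ⊗[k] S)[X] →+ T ⊗[k] S := eval₂AddMonoidHom
    (Algebra.TensorProduct.map ι (AlgHom.id k S) : R ⊗[k] S →+* T ⊗[k] S) (x ⊗ₜ[k] 1)
  have rTensor_coeff (p : (R ⊗[k] S)[X]) (j : ℕ) :
      (hT.coeff j).rTensor S (f p) = p.coeff j := by
    induction p using Polynomial.induction_on' with
    | add p q hp hq => rw [map_add, map_add, hp, hq, coeff_add]
    | monomial i z =>
      rw [eval₂AddMonoidHom_apply, eval₂_monomial, AlgHom.coe_toRingHom,
        rTensor_coeff_map_mul_pow, coeff_monomial]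
  intro p q hpq
  ext1 j
  rw [← rTensor_coeff p, ← rTensor_coeff q]
  exact congrArg _ hpq

theorem eval₂_tmul_one_surjective (hT : IsOreExtension k σ δ ι x) :
    Function.Surjective (eval₂
      (Algebra.TensorProduct.map ι (AlgHom.id k S) : R ⊗[k] S →+* T ⊗[k] S) (x ⊗ₜ[k] 1)) := by
  intro t
  change t ∈ (eval₂AddMonoidHom
    (Algebra.TensorProduct.map ι (AlgHom.id k S) : R ⊗[k] S →+* T ⊗[k] S) (x ⊗ₜ[k] 1)).range
  induction t with
  | zero => exact zero_mem _
  | add t t' ht ht' => exact add_mem ht ht'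
  | tmul t s =>
    rw [hT.eq_sum_range (Nat.lt_succ_self (hT.natDegree t)), TensorProduct.sum_tmul]
    refine sum_mem fun i _ => ⟨monomial i (hT.coeff i t ⊗ₜ s), ?_⟩
    rw [eval₂AddMonoidHom_apply, eval₂_monomial, AlgHom.coe_toRingHom,
      Algebra.TensorProduct.tmul_pow, Algebra.TensorProduct.map_tmul,
      Algebra.TensorProduct.tmul_mul_tmul, one_pow, mul_one, AlgHom.id_apply]

theorem tensorRight (hT : IsOreExtension k σ δ ι x) :
    IsOreExtension k (Algebra.TensorProduct.congr σ (AlgEquiv.refl (A₁ := S))) (δ.rTensor S)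
      (Algebra.TensorProduct.map ι (AlgHom.id k S)) (x ⊗ₜ[k] 1) where
  isSigmaDerivation a b := by
    induction a with
    | zero => simp only [zero_mul, map_zero, add_zero]
    | add a a' ha ha' => rw [add_mul, map_add, ha, ha', map_add, map_add, add_mul, add_mul]; abel
    | tmul a s =>
      induction b with
      | zero => simp only [mul_zero, map_zero, add_zero]
      | add b b' hb hb' => rw [mul_add, map_add, hb, hb', map_add, mul_add, mul_add]; abel
      | tmul b s' => simp [hT.isSigmaDerivation, TensorProduct.add_tmul]
  injective := Module.Flat.rTensor_preserves_injective_linearMap ι.toLinearMap hT.injective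
  rel z := by
    induction z with
    | zero => simp only [map_zero, mul_zero, zero_mul, add_zero]
    | add z z' hz hz' =>
      rw [map_add, mul_add, hz, hz', map_add, map_add, map_add, map_add, add_mul]; abel
    | tmul r s => simp [hT.rel, TensorProduct.add_tmul]
  free := (free_iff_bijective_eval₂ _ _).mpr
    ⟨hT.eval₂_tmul_one_injective S, hT.eval₂_tmul_one_surjective S⟩

theorem coeff_tensorRight (hT : IsOreExtension k σ δ ι x) (i : ℕ) :
    (hT.tensorRight S).coeff i = (hT.coeff i).rTensor S :=
  (hT.tensorRight S).linearMap_ext fun z j => by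
    rw [coeff_map_mul_pow, rTensor_coeff_map_mul_pow]

theorem isDomain_tensorProduct [IsDomain (R ⊗[k] S)] (hT : IsOreExtension k σ δ ι x) :
    IsDomain (S ⊗[k] T) :=
  have := (hT.tensorRight S).isDomain
  (Algebra.TensorProduct.comm k S T).toMulEquiv.isDomain _

end TensorRight

section Truncate

variable {k R T : Type*} [Field k] [Ring R] [Algebra k R] [Ring T] [Algebra k T]
  {σ : R ≃ₐ[k] R} {δ : R →ₗ[k] R} {ι : R →ₐ[k] T} {x : T}

/-- Truncation of the left normal form to the terms of degree less than `n`. -/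
noncomputable def truncate (hT : IsOreExtension k σ δ ι x) (n : ℕ) : T →ₗ[k] T :=
  ∑ i ∈ Finset.range n, LinearMap.mulRight k (x ^ i) ∘ₗ ι.toLinearMap ∘ₗ hT.coeff i

theorem truncate_apply (hT : IsOreExtension k σ δ ι x) (n : ℕ) (t : T) :
    hT.truncate n t = ∑ i ∈ Finset.range n, ι (hT.coeff i t) * x ^ i :=
  LinearMap.sum_apply ..

theorem truncate_eq_self (hT : IsOreExtension k σ δ ι x) {n : ℕ} {t : T}
    (ht : hT.natDegree t < n) : hT.truncate n t = t := by
  rw [truncate_apply, ← hT.eq_sum_range ht]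

theorem coeff_comp_truncate_two (hT : IsOreExtension k σ δ ι x) {f : T →ₗ[k] T}
    (hf : ∀ r t, f (ι r * t) = ι r * f t) (hf_one : f 1 = 0) (i : ℕ) :
    hT.coeff i ∘ₗ f ∘ₗ hT.truncate 2 = LinearMap.mulRight k (hT.coeff i (f x)) ∘ₗ hT.coeff 1 := by
  ext t
  simp only [LinearMap.comp_apply, truncate_apply, Finset.sum_range_succ, Finset.sum_range_zero,
    pow_zero, pow_one, map_add, hf, hf_one, mul_zero, zero_add, coeff_map_mul,
    LinearMap.mulRight_apply]

theorem truncate_tensorRight (hT : IsOreExtension k σ δ ι x) (S : Type*) [Ring S] [Algebra k S]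
    (n : ℕ) : (hT.tensorRight S).truncate n = (hT.truncate n).rTensor S := by
  refine TensorProduct.ext' fun t s => ?_
  rw [truncate_apply, LinearMap.rTensor_tmul, truncate_apply, TensorProduct.sum_tmul]
  refine Finset.sum_congr rfl fun i _ => ?_
  rw [hT.coeff_tensorRight S, LinearMap.rTensor_tmul, Algebra.TensorProduct.map_tmul,
    AlgHom.id_apply, Algebra.TensorProduct.tmul_pow, Algebra.TensorProduct.tmul_mul_tmul, one_pow,
    mul_one]

theorem map_truncate_apply (hT : IsOreExtension k σ δ ι x) (n : ℕ) (z : T ⊗[k] T) :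
    TensorProduct.map (hT.truncate n) (hT.truncate n) z =
      ∑ i ∈ Finset.range n, ∑ j ∈ Finset.range n,
        Algebra.TensorProduct.map ι ι (TensorProduct.map (hT.coeff i) (hT.coeff j) z) *
          ((x ^ i) ⊗ₜ[k] (x ^ j)) := by
  induction z with
  | zero => simp only [map_zero, zero_mul, Finset.sum_const_zero]
  | add z z' hz hz' => simp only [map_add, add_mul, Finset.sum_add_distrib, hz, hz']
  | tmul s t =>
    simp only [TensorProduct.map_tmul, Algebra.TensorProduct.map_tmul,
      Algebra.TensorProduct.tmul_mul_tmul]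
    rw [truncate_apply, truncate_apply, TensorProduct.sum_tmul]
    simp only [TensorProduct.tmul_sum]

end Truncate

end IsOreExtension

section Slice

variable {k M N P : Type*} [CommSemiring k] [AddCommMonoid M] [Module k M] [AddCommMonoid N]
  [Module k N] [AddCommMonoid P] [Module k P]

/-- The slice map `φ ⊗ id : M ⊗ N → N` of a linear form `φ` on the left factor. -/
noncomputable def sliceLeft (φ : M →ₗ[k] k) : M ⊗[k] N →ₗ[k] N :=
  (TensorProduct.lid k N).toLinearMap ∘ₗ φ.rTensor N

/-- The slice map `id ⊗ φ : M ⊗ N → M` of a linear form `φ` on the right factor. -/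
noncomputable def sliceRight (φ : N →ₗ[k] k) : M ⊗[k] N →ₗ[k] M :=
  (TensorProduct.rid k M).toLinearMap ∘ₗ φ.lTensor M

theorem sliceLeft_tmul (φ : M →ₗ[k] k) (m : M) (n : N) : sliceLeft φ (m ⊗ₜ[k] n) = φ m • n :=
  rfl

theorem sliceRight_tmul (φ : N →ₗ[k] k) (m : M) (n : N) : sliceRight φ (m ⊗ₜ[k] n) = φ n • m :=
  rfl

theorem apply_sliceLeft (φ : M →ₗ[k] k) (ψ : N →ₗ[k] k) (z : M ⊗[k] N) :
    ψ (sliceLeft φ z) = φ (sliceRight ψ z) := by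
  suffices ψ ∘ₗ sliceLeft φ = φ ∘ₗ sliceRight ψ from LinearMap.congr_fun this z
  exact TensorProduct.ext' fun m n => by
    simp only [LinearMap.comp_apply, sliceLeft_tmul, sliceRight_tmul, map_smul, smul_eq_mul,
      mul_comm]

theorem sliceRight_comm (φ : M →ₗ[k] k) (z : M ⊗[k] N) :
    sliceRight φ (TensorProduct.comm k M N z) = sliceLeft φ z := by
  suffices sliceRight φ ∘ₗ (TensorProduct.comm k M N).toLinearMap = sliceLeft φ from
    LinearMap.congr_fun this z
  exact TensorProduct.ext' fun _ _ => rfl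

theorem sliceLeft_lTensor (φ : M →ₗ[k] k) (f : N →ₗ[k] P) (z : M ⊗[k] N) :
    sliceLeft φ (f.lTensor M z) = f (sliceLeft φ z) := by
  suffices sliceLeft φ ∘ₗ f.lTensor M = f ∘ₗ sliceLeft φ from LinearMap.congr_fun this z
  exact TensorProduct.ext' fun m n => (f.map_smul (φ m) n).symm

theorem sliceRight_rTensor (φ : N →ₗ[k] k) (f : M →ₗ[k] P) (z : M ⊗[k] N) :
    sliceRight φ (f.rTensor N z) = f (sliceRight φ z) := by
  suffices sliceRight φ ∘ₗ f.rTensor N = f ∘ₗ sliceRight φ from LinearMap.congr_fun this z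
  exact TensorProduct.ext' fun m n => (f.map_smul (φ n) m).symm

theorem sliceLeft_assoc (φ : M →ₗ[k] k) (z : (M ⊗[k] N) ⊗[k] P) :
    sliceLeft φ (TensorProduct.assoc k M N P z) = (sliceLeft φ).rTensor P z := by
  suffices sliceLeft φ ∘ₗ (TensorProduct.assoc k M N P).toLinearMap = (sliceLeft φ).rTensor P from
    LinearMap.congr_fun this z
  exact TensorProduct.ext_threefold fun _ _ _ => rfl

theorem lTensor_sliceRight_assoc (φ : P →ₗ[k] k) (z : (M ⊗[k] N) ⊗[k] P) :
    (sliceRight φ).lTensor M (TensorProduct.assoc k M N P z) = sliceRight φ z := by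
  suffices (sliceRight φ).lTensor M ∘ₗ (TensorProduct.assoc k M N P).toLinearMap = sliceRight φ from
    LinearMap.congr_fun this z
  exact TensorProduct.ext_threefold fun m n p => TensorProduct.tmul_smul (φ p) m n

theorem lTensor_sliceLeft_assoc (φ : N →ₗ[k] k) (z : (M ⊗[k] N) ⊗[k] P) :
    (sliceLeft φ).lTensor M (TensorProduct.assoc k M N P z) = (sliceRight φ).rTensor P z := by
  suffices (sliceLeft φ).lTensor M ∘ₗ (TensorProduct.assoc k M N P).toLinearMap =
      (sliceRight φ).rTensor P from LinearMap.congr_fun this z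
  exact TensorProduct.ext_threefold fun m n p => (TensorProduct.smul_tmul (φ n) m p).symm

end Slice

theorem exists_sliceRight_ne_zero {k M N : Type*} [Field k] [AddCommGroup M] [Module k M]
    [AddCommGroup N] [Module k N] {z : M ⊗[k] N} (hz : z ≠ 0) :
    ∃ φ : N →ₗ[k] k, sliceRight φ z ≠ 0 := by
  classical
  let b := Module.Basis.ofVectorSpace k N
  by_contra! h
  refine hz ((TensorProduct.equivFinsuppOfBasisRight b).injective (Finsupp.ext fun i => ?_))
  rw [TensorProduct.equivFinsuppOfBasisRight_apply]
  exact h (b.coord i)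

section SliceMul

variable {k R T : Type*} [CommSemiring k] [Semiring R] [Algebra k R] [Semiring T] [Algebra k T]
  {ι : R →ₐ[k] T}

theorem sliceLeft_map_mul {ε : R →ₗ[k] k} {φ : T →ₗ[k] k}
    (hφ : ∀ r t, φ (ι r * t) = ε r * φ t) (z : R ⊗[k] R) (m : T ⊗[k] T) :
    sliceLeft φ (Algebra.TensorProduct.map ι ι z * m) =
      ι (sliceLeft ε z) * sliceLeft φ m := by
  induction z with
  | zero => simp only [map_zero, zero_mul]
  | add z z' hz hz' => simp only [map_add, add_mul, hz, hz']
  | tmul r s =>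
    induction m with
    | zero => simp only [map_zero, mul_zero]
    | add m m' hm hm' => simp only [map_add, mul_add, hm, hm']
    | tmul t u =>
      simp only [Algebra.TensorProduct.map_tmul, Algebra.TensorProduct.tmul_mul_tmul,
        sliceLeft_tmul, hφ, map_smul, smul_mul_smul_comm]

theorem sliceRight_map_mul {ε : R →ₗ[k] k} {φ : T →ₗ[k] k}
    (hφ : ∀ r t, φ (ι r * t) = ε r * φ t) (z : R ⊗[k] R) (m : T ⊗[k] T) :
    sliceRight φ (Algebra.TensorProduct.map ι ι z * m) =
      ι (sliceRight ε z) * sliceRight φ m := by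
  induction z with
  | zero => simp only [map_zero, zero_mul]
  | add z z' hz hz' => simp only [map_add, add_mul, hz, hz']
  | tmul r s =>
    induction m with
    | zero => simp only [map_zero, mul_zero]
    | add m m' hm hm' => simp only [map_add, mul_add, hm, hm']
    | tmul t u =>
      simp only [Algebra.TensorProduct.map_tmul, Algebra.TensorProduct.tmul_mul_tmul,
        sliceRight_tmul, hφ, map_smul, smul_mul_smul_comm]

end SliceMul

section ComulSlice

open Coalgebra

variable {k C : Type*} [CommSemiring k] [AddCommMonoid C] [Module k C] [Coalgebra k C]

theorem sliceLeft_counit_comul (c : C) : sliceLeft counit (comul (R := k) c) = c := by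
  rw [sliceLeft, LinearMap.comp_apply, rTensor_counit_comul, LinearEquiv.coe_coe,
    TensorProduct.lid_tmul, one_smul]

theorem sliceRight_counit_comul (c : C) : sliceRight counit (comul (R := k) c) = c := by
  rw [sliceRight, LinearMap.comp_apply, lTensor_counit_comul, LinearEquiv.coe_coe,
    TensorProduct.rid_tmul, one_smul]

/-- The right action `c ↦ φ(c₁) c₂` of a linear form `φ` on a coalgebra. -/
noncomputable def comulSliceLeft (φ : C →ₗ[k] k) : C →ₗ[k] C :=
  sliceLeft φ ∘ₗ comul

/-- The left action `c ↦ c₁ φ(c₂)` of a linear form `φ` on a coalgebra. -/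
noncomputable def comulSliceRight (φ : C →ₗ[k] k) : C →ₗ[k] C :=
  sliceRight φ ∘ₗ comul

theorem counit_comulSliceLeft (φ : C →ₗ[k] k) (c : C) :
    counit (R := k) (comulSliceLeft φ c) = φ c := by
  rw [comulSliceLeft, LinearMap.comp_apply, apply_sliceLeft, sliceRight_counit_comul]

theorem counit_comulSliceRight (φ : C →ₗ[k] k) (c : C) :
    counit (R := k) (comulSliceRight φ c) = φ c := by
  rw [comulSliceRight, LinearMap.comp_apply, ← apply_sliceLeft, sliceLeft_counit_comul]

theorem comul_comulSliceLeft (φ : C →ₗ[k] k) (c : C) :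
    comul (R := k) (comulSliceLeft φ c) = (comulSliceLeft φ).rTensor C (comul c) :=
  calc comul (R := k) (comulSliceLeft φ c)
      = sliceLeft φ (comul.lTensor C (comul (R := k) c)) := (sliceLeft_lTensor φ comul _).symm
    _ = (sliceLeft φ).rTensor C (comul.rTensor C (comul (R := k) c)) := by
        rw [← coassoc_apply, sliceLeft_assoc]
    _ = (comulSliceLeft φ).rTensor C (comul c) := (LinearMap.rTensor_comp_apply ..).symm

theorem comul_comulSliceRight (φ : C →ₗ[k] k) (c : C) :
    comul (R := k) (comulSliceRight φ c) = (comulSliceRight φ).lTensor C (comul c) :=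
  calc comul (R := k) (comulSliceRight φ c)
      = sliceRight φ (comul.rTensor C (comul (R := k) c)) := (sliceRight_rTensor φ comul _).symm
    _ = (sliceRight φ).lTensor C (comul.lTensor C (comul (R := k) c)) := by
        rw [← coassoc_apply, lTensor_sliceRight_assoc]
    _ = (comulSliceRight φ).lTensor C (comul c) := (LinearMap.lTensor_comp_apply ..).symm

theorem lTensor_comulSliceLeft_comul (φ : C →ₗ[k] k) (c : C) :
    (comulSliceLeft φ).lTensor C (comul c) = (comulSliceRight φ).rTensor C (comul (R := k) c) := by
  rw [comulSliceLeft, comulSliceRight, LinearMap.lTensor_comp_apply, LinearMap.rTensor_comp_apply,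
    ← coassoc_apply, lTensor_sliceLeft_assoc]

theorem comulAlgHom_injective (k A : Type*) [CommSemiring k] [Semiring A] [Bialgebra k A] :
    Function.Injective (Bialgebra.comulAlgHom k A) :=
  Function.LeftInverse.injective (g := sliceLeft counit) sliceLeft_counit_comul

theorem isDomain_of_tensorProduct_self (k A : Type*) [CommSemiring k] [Semiring A] [Bialgebra k A]
    [IsDomain (A ⊗[k] A)] : IsDomain A :=
  (comulAlgHom_injective k A).isDomain

end ComulSlice

section GroupLikeUnit

open Coalgebra

variable {k A : Type*} [CommSemiring k] [Semiring A] [Bialgebra k A]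

theorem isGroupLikeElem_of_comul_mul_eq {b β : A} (hb : IsUnit b)
    (counit_β : counit (R := k) β = 1)
    (hβ : comul (R := k) (b * β) = comul (R := k) b * (β ⊗ₜ β)) : IsGroupLikeElem k β where
  counit_eq_one := counit_β
  comul_eq_tmul_self := by
    rw [Bialgebra.comul_mul] at hβ
    exact (hb.map (Bialgebra.comulAlgHom k A)).mul_left_cancel hβ

theorem eq_comul_mul_one_tmul_inv {c : A ⊗[k] A} {b : Aˣ}
    (hb : comul (b : A) = c * (1 ⊗ₜ[k] (b : A))) :
    c = comul (R := k) (b : A) * (1 ⊗ₜ (↑b⁻¹ : A)) := by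
  rw [hb, mul_assoc, Algebra.TensorProduct.tmul_mul_tmul, one_mul, Units.mul_inv,
    ← Algebra.TensorProduct.one_def, mul_one]

theorem eq_comul_mul_inv_tmul {c d : A ⊗[k] A} {a : A} {b : Aˣ}
    (hb : comul (b : A) = c * (1 ⊗ₜ[k] (b : A)))
    (hab : c * (1 ⊗ₜ[k] a) = d * ((b : A) ⊗ₜ[k] 1)) :
    d = comul (R := k) (b : A) * ((↑b⁻¹ : A) ⊗ₜ (↑b⁻¹ * a)) :=
  calc d = d * ((b : A) ⊗ₜ 1) * ((↑b⁻¹ : A) ⊗ₜ 1) := by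
        rw [mul_assoc, Algebra.TensorProduct.tmul_mul_tmul, Units.mul_inv, one_mul,
          ← Algebra.TensorProduct.one_def, mul_one]
    _ = comul (R := k) (b : A) * ((↑b⁻¹ : A) ⊗ₜ (↑b⁻¹ * a)) := by
        rw [← hab, eq_comul_mul_one_tmul_inv hb, mul_assoc, mul_assoc,
          Algebra.TensorProduct.tmul_mul_tmul, Algebra.TensorProduct.tmul_mul_tmul, one_mul,
          one_mul, mul_one]

theorem comul_inv_mul_comul {b β : Aˣ} (hβ : IsGroupLikeElem k (β : A)) :
    comul (R := k) (↑(b * β)⁻¹ : A) * comul (R := k) (b : A) = (↑β⁻¹ : A) ⊗ₜ (↑β⁻¹ : A) := by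
  rw [mul_inv_rev, Units.val_mul, Bialgebra.comul_mul, mul_assoc, ← Bialgebra.comul_mul,
    Units.inv_mul, Bialgebra.comul_one, mul_one]
  exact (hβ.of_mul_eq_one β.mul_inv β.inv_mul).comul_eq_tmul_self

end GroupLikeUnit

section AntipodeMul

open Coalgebra

/-- The linear map `a ⊗ b ↦ S(a) b` of a Hopf algebra. -/
noncomputable def antipodeMul (k A : Type*) [CommSemiring k] [Semiring A] [HopfAlgebra k A] :
    A ⊗[k] A →ₗ[k] A :=
  LinearMap.mul' k A ∘ₗ (HopfAlgebra.antipode k).rTensor A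

variable {k A : Type*} [CommSemiring k] [Semiring A] [HopfAlgebra k A]

theorem antipodeMul_tmul (a b : A) : antipodeMul k A (a ⊗ₜ b) = HopfAlgebra.antipode k a * b :=
  rfl

theorem antipodeMul_comul (a : A) : antipodeMul k A (comul a) = algebraMap k A (counit a) :=
  HopfAlgebra.mul_antipode_rTensor_comul_apply a

theorem antipodeMul_mul_tmul (z : A ⊗[k] A) (a b : A) :
    antipodeMul k A (z * (a ⊗ₜ b)) = HopfAlgebra.antipode k a * antipodeMul k A z * b := by
  induction z with
  | zero => simp only [map_zero, zero_mul, mul_zero]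
  | add z z' hz hz' => simp only [add_mul, map_add, mul_add, hz, hz']
  | tmul c d =>
    simp only [Algebra.TensorProduct.tmul_mul_tmul, antipodeMul_tmul,
      HopfAlgebra.antipode_mul_antidistrib, mul_assoc]

theorem counit_antipodeMul (z : A ⊗[k] A) :
    counit (R := k) (antipodeMul k A z) = counit (R := k) (sliceLeft counit z) := by
  induction z with
  | zero => simp only [map_zero]
  | add z z' hz hz' => simp only [map_add, hz, hz']
  | tmul a b =>
    rw [antipodeMul_tmul, Bialgebra.counit_mul, HopfAlgebra.counit_antipode, sliceLeft_tmul,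
      map_smul, smul_eq_mul]

theorem isUnit_of_comul_eq_mul_one_tmul [IsDedekindFiniteMonoid A] {c : A ⊗[k] A} {b : A}
    (hb : comul b = c * (1 ⊗ₜ[k] b)) (counit_b : counit (R := k) b = 1) : IsUnit b := by
  have antipodeMul_mul_b : antipodeMul k A c * b = 1 :=
    calc antipodeMul k A c * b = antipodeMul k A (c * (1 ⊗ₜ b)) := by
          rw [antipodeMul_mul_tmul, HopfAlgebra.antipode_one, one_mul]
      _ = 1 := by rw [← hb, antipodeMul_comul, counit_b, map_one]
  exact IsUnit.of_mul_eq_one_right _ antipodeMul_mul_b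

theorem exists_isGroupLikeElem_of_comul_eq [IsDedekindFiniteMonoid A] {a b : A}
    {c d : A ⊗[k] A} (ha : comul a = d * (a ⊗ₜ[k] 1)) (hb : comul b = c * (1 ⊗ₜ[k] b))
    (hab : c * (1 ⊗ₜ[k] a) = d * (b ⊗ₜ[k] 1)) (counit_a : counit (R := k) a = 1)
    (counit_b : counit (R := k) b = 1) :
    ∃ u β : Aˣ, IsGroupLikeElem k (β : A) ∧ comul (R := k) (u : A) * c = (↑β⁻¹ : A) ⊗ₜ (u : A) ∧
      comul (R := k) (u : A) * d = (u : A) ⊗ₜ 1 := by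
  obtain ⟨b, rfl⟩ := isUnit_of_comul_eq_mul_one_tmul hb counit_b
  have c_eq := eq_comul_mul_one_tmul_inv hb
  have d_eq := eq_comul_mul_inv_tmul hb hab
  have b_mul : b * (↑b⁻¹ * a) = a := b.mul_inv_cancel_left a
  have groupLike : IsGroupLikeElem k (↑b⁻¹ * a) := by
    refine isGroupLikeElem_of_comul_mul_eq b.isUnit ?_ ?_
    · rw [← counit_a, ← one_mul (counit _), ← counit_b, ← Bialgebra.counit_mul, b_mul]
    · rw [b_mul, ha, d_eq, mul_assoc, Algebra.TensorProduct.tmul_mul_tmul, mul_one]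
  obtain ⟨β, hβ⟩ := groupLike.isUnit
  rw [← hβ] at groupLike d_eq
  refine ⟨(b * β)⁻¹, β, groupLike, ?_, ?_⟩
  · rw [c_eq, ← mul_assoc, comul_inv_mul_comul groupLike, Algebra.TensorProduct.tmul_mul_tmul,
      mul_one, mul_inv_rev, Units.val_mul]
  · rw [d_eq, ← mul_assoc, comul_inv_mul_comul groupLike, Algebra.TensorProduct.tmul_mul_tmul,
      Units.inv_mul, mul_inv_rev, Units.val_mul]

end AntipodeMul

section HopfHom

open Coalgebra

/-- `ι` is a morphism of Hopf algebras. -/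
structure IsHopfHom {k R T : Type*} [CommSemiring k] [Semiring R] [HopfAlgebra k R] [Semiring T]
    [HopfAlgebra k T] (ι : R →ₐ[k] T) : Prop where
  counit_map : ∀ r, counit (R := k) (ι r) = counit (R := k) r
  comul_map : ∀ r, comul (R := k) (ι r) = Algebra.TensorProduct.map ι ι (comul (R := k) r)
  antipode_map : ∀ r, HopfAlgebra.antipode k (ι r) = ι (HopfAlgebra.antipode k r)

variable {k R T : Type*} [CommSemiring k] [Semiring R] [HopfAlgebra k R] [Semiring T]
  [HopfAlgebra k T] {ι : R →ₐ[k] T}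

theorem IsHopfHom.comulSliceLeft_map_mul (hι : IsHopfHom ι) {φ : T →ₗ[k] k}
    (hφ : ∀ r t, φ (ι r * t) = counit (R := k) r * φ t) (r : R) (t : T) :
    comulSliceLeft φ (ι r * t) = ι r * comulSliceLeft φ t := by
  rw [comulSliceLeft, LinearMap.comp_apply, Bialgebra.comul_mul, hι.comul_map,
    sliceLeft_map_mul hφ, sliceLeft_counit_comul, LinearMap.comp_apply]

theorem IsHopfHom.comulSliceRight_map_mul (hι : IsHopfHom ι) {φ : T →ₗ[k] k}
    (hφ : ∀ r t, φ (ι r * t) = counit (R := k) r * φ t) (r : R) (t : T) :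
    comulSliceRight φ (ι r * t) = ι r * comulSliceRight φ t := by
  rw [comulSliceRight, LinearMap.comp_apply, Bialgebra.comul_mul, hι.comul_map,
    sliceRight_map_mul hφ, sliceRight_counit_comul, LinearMap.comp_apply]

theorem IsHopfHom.antipodeMul_map (hι : IsHopfHom ι) (z : R ⊗[k] R) :
    antipodeMul k T (Algebra.TensorProduct.map ι ι z) = ι (antipodeMul k R z) := by
  induction z with
  | zero => simp only [map_zero]
  | add z z' hz hz' => simp only [map_add, hz, hz']
  | tmul r s =>
    rw [Algebra.TensorProduct.map_tmul, antipodeMul_tmul, antipodeMul_tmul, map_mul,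
      hι.antipode_map]

end HopfHom

namespace IsOreExtension

section DegreeOfComul

variable {k R T : Type*} [Field k] [Ring R] [Algebra k R] [Ring T] [Algebra k T]
  {σ : R ≃ₐ[k] R} {δ : R →ₗ[k] R} {ι : R →ₐ[k] T} {x : T}

theorem natDegree_tensorRight_lTensor_le (hT : IsOreExtension k σ δ ι x) {S : Type*} [Ring S]
    [Algebra k S] (f : S →ₗ[k] S) (z : T ⊗[k] S) :
    (hT.tensorRight S).natDegree (f.lTensor T z) ≤ (hT.tensorRight S).natDegree z := by
  refine (hT.tensorRight S).natDegree_le_iff.mpr fun i hi => ?_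
  have coeff_eq_zero := (hT.tensorRight S).natDegree_le_iff.mp le_rfl i hi
  rw [hT.coeff_tensorRight S] at coeff_eq_zero ⊢
  rw [← LinearMap.comp_apply, LinearMap.rTensor_comp_lTensor, ← LinearMap.lTensor_comp_rTensor,
    LinearMap.comp_apply, coeff_eq_zero, map_zero]

theorem natDegree_tensorRight_le_one [IsDomain (R ⊗[k] T)] (hT : IsOreExtension k σ δ ι x)
    {D : T →ₐ[k] T ⊗[k] T} {d : R →ₐ[k] R ⊗[k] R} (hd : Function.Injective d)
    (hD : ∀ r, D (ι r) = Algebra.TensorProduct.map ι ι (d r))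
    (hslice : ∀ φ : T →ₗ[k] k,
      D (sliceRight φ (D x)) = (sliceRight φ ∘ₗ D.toLinearMap).lTensor T (D x)) :
    (hT.tensorRight T).natDegree (D x) ≤ 1 := by
  set n := (hT.tensorRight T).natDegree (D x) with hn
  by_contra! one_lt
  have Dx_ne_zero : D x ≠ 0 := by
    intro h0
    rw [h0, ← map_zero (Algebra.TensorProduct.map ι (AlgHom.id k T)), natDegree_map] at hn
    lia
  obtain ⟨φ, hφ⟩ :=
    exists_sliceRight_ne_zero ((hT.tensorRight T).coeff_natDegree_ne_zero Dx_ne_zero)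
  have le_natDegree_slice : n ≤ hT.natDegree (sliceRight φ (D x)) := by
    rw [hT.coeff_tensorRight T, sliceRight_rTensor] at hφ
    exact hT.le_natDegree_of_ne_zero hφ
  have natDegree_D (t : T) : (hT.tensorRight T).natDegree (D t) = hT.natDegree t * n :=
    (hT.tensorRight T).natDegree_algHom hT (d := (Algebra.TensorProduct.map (.id k R) ι).comp d)
      ((Module.Flat.lTensor_preserves_injective_linearMap ι.toLinearMap hT.injective).comp hd)
      (fun r => (hD r).trans
        (AlgHom.congr_fun (Algebra.TensorProduct.map_comp ι (.id k R) (.id k T) ι) (d r))) t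
  have sq_le : n * n ≤ n := calc
    n * n ≤ hT.natDegree (sliceRight φ (D x)) * n := Nat.mul_le_mul_right n le_natDegree_slice
    _ = (hT.tensorRight T).natDegree (D (sliceRight φ (D x))) := (natDegree_D _).symm
    _ ≤ n := hslice φ ▸ hT.natDegree_tensorRight_lTensor_le _ _
  nlinarith

end DegreeOfComul

section CounitCoeff

open Coalgebra

variable {k R T : Type*} [Field k] [Ring R] [Bialgebra k R] [Ring T]
  {σ : R ≃ₐ[k] R} {δ : R →ₗ[k] R}

section Algebra

variable [Algebra k T] {ι : R →ₐ[k] T} {x : T}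

/-- The linear form `t ↦ ε(c₁)`, where `c₁` is the coefficient of `x` in `t`. Slicing `Δ` with it
isolates the terms of `Δ(x)` in which a given factor has degree one. -/
noncomputable def counitCoeff (hT : IsOreExtension k σ δ ι x) : T →ₗ[k] k :=
  counit ∘ₗ hT.coeff 1

theorem counitCoeff_map_mul (hT : IsOreExtension k σ δ ι x) (r : R) (t : T) :
    hT.counitCoeff (ι r * t) = counit (R := k) r * hT.counitCoeff t := by
  rw [counitCoeff, LinearMap.comp_apply, coeff_map_mul, Bialgebra.counit_mul, LinearMap.comp_apply]

theorem counitCoeff_one (hT : IsOreExtension k σ δ ι x) : hT.counitCoeff 1 = 0 := by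
  rw [counitCoeff, LinearMap.comp_apply, ← map_one ι, hT.coeff_map, if_neg zero_ne_one, map_zero]

theorem counitCoeff_self (hT : IsOreExtension k σ δ ι x) : hT.counitCoeff x = 1 := by
  rw [counitCoeff, LinearMap.comp_apply, hT.coeff_self, if_pos rfl, Bialgebra.counit_one]

end Algebra

variable [Bialgebra k T] {ι : R →ₐ[k] T} {x : T}

theorem comulSliceLeft_counitCoeff_one (hT : IsOreExtension k σ δ ι x) :
    comulSliceLeft hT.counitCoeff 1 = 0 := by
  rw [comulSliceLeft, LinearMap.comp_apply, Bialgebra.comul_one, Algebra.TensorProduct.one_def,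
    sliceLeft_tmul, counitCoeff_one, zero_smul]

theorem comulSliceRight_counitCoeff_one (hT : IsOreExtension k σ δ ι x) :
    comulSliceRight hT.counitCoeff 1 = 0 := by
  rw [comulSliceRight, LinearMap.comp_apply, Bialgebra.comul_one, Algebra.TensorProduct.one_def,
    sliceRight_tmul, counitCoeff_one, zero_smul]

end CounitCoeff

section ComulCoeff

open Coalgebra

variable {k R T : Type*} [Field k] [Ring R] [HopfAlgebra k R] [Ring T] [HopfAlgebra k T]
  {σ : R ≃ₐ[k] R} {δ : R →ₗ[k] R} {ι : R →ₐ[k] T} {x : T}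

/-- The coefficient `cᵢⱼ ∈ R ⊗ R` of `xⁱ ⊗ xʲ` in the left normal form of `Δ(x)`. -/
noncomputable def comulCoeff (hT : IsOreExtension k σ δ ι x) (i j : ℕ) : R ⊗[k] R :=
  TensorProduct.map (hT.coeff i) (hT.coeff j) (comul x)

section DegreeBound

variable [IsDomain (R ⊗[k] R)]

theorem natDegree_comul_self_le_one (hT : IsOreExtension k σ δ ι x) (hι : IsHopfHom ι) :
    (hT.tensorRight T).natDegree (comul (R := k) x) ≤ 1 := by
  have := hT.isDomain_tensorProduct R
  exact hT.natDegree_tensorRight_le_one (comulAlgHom_injective k R) (D := Bialgebra.comulAlgHom k T)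
    hι.comul_map fun φ => comul_comulSliceRight φ x

theorem natDegree_comm_comul_self_le_one (hT : IsOreExtension k σ δ ι x) (hι : IsHopfHom ι) :
    (hT.tensorRight T).natDegree (TensorProduct.comm k T T (comul (R := k) x)) ≤ 1 := by
  have := hT.isDomain_tensorProduct R
  let Dop := (Algebra.TensorProduct.comm k T T).toAlgHom.comp (Bialgebra.comulAlgHom k T)
  let dop := (Algebra.TensorProduct.comm k R R).toAlgHom.comp (Bialgebra.comulAlgHom k R)
  have dop_injective : Function.Injective dop :=
    Function.LeftInverse.injective (g := sliceRight counit) fun r =>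
      (sliceRight_comm counit _).trans (sliceLeft_counit_comul r)
  have slice_Dop (φ : T →ₗ[k] k) : sliceRight φ ∘ₗ Dop.toLinearMap = comulSliceLeft φ :=
    LinearMap.ext fun t => sliceRight_comm φ (comul t)
  refine hT.natDegree_tensorRight_le_one dop_injective (D := Dop) (fun r => ?_) fun φ => ?_
  · exact (congrArg _ (hι.comul_map r)).trans
      (AlgHom.congr_fun (Algebra.TensorProduct.comm_comp_map ι ι) (comul r))
  · calc Dop (sliceRight φ (Dop x))
        = TensorProduct.comm k T T (comul (R := k) (comulSliceLeft φ x)) :=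
          congrArg Dop (LinearMap.congr_fun (slice_Dop φ) x)
      _ = TensorProduct.comm k T T ((comulSliceLeft φ).rTensor T (comul (R := k) x)) := by
          rw [comul_comulSliceLeft]
      _ = (comulSliceLeft φ).lTensor T (TensorProduct.comm k T T (comul (R := k) x)) :=
          (TensorProduct.map_comm ..).symm
      _ = (sliceRight φ ∘ₗ Dop.toLinearMap).lTensor T (Dop x) := by rw [slice_Dop]; rfl

theorem rTensor_truncate_comul_self (hT : IsOreExtension k σ δ ι x) (hι : IsHopfHom ι) :
    (hT.truncate 2).rTensor T (comul x) = comul (R := k) x := by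
  rw [← hT.truncate_tensorRight T]
  exact (hT.tensorRight T).truncate_eq_self (Nat.lt_succ_of_le (hT.natDegree_comul_self_le_one hι))

theorem lTensor_truncate_comul_self (hT : IsOreExtension k σ δ ι x) (hι : IsHopfHom ι) :
    (hT.truncate 2).lTensor T (comul x) = comul (R := k) x := by
  apply (TensorProduct.comm k T T).injective
  calc TensorProduct.comm k T T ((hT.truncate 2).lTensor T (comul (R := k) x))
      = (hT.truncate 2).rTensor T (TensorProduct.comm k T T (comul (R := k) x)) :=
        (TensorProduct.map_comm ..).symm
    _ = TensorProduct.comm k T T (comul (R := k) x) := by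
        rw [← hT.truncate_tensorRight T]
        exact (hT.tensorRight T).truncate_eq_self
          (Nat.lt_succ_of_le (hT.natDegree_comm_comul_self_le_one hι))

theorem comul_self_eq (hT : IsOreExtension k σ δ ι x) (hι : IsHopfHom ι) :
    comul (R := k) x =
      Algebra.TensorProduct.map ι ι (hT.comulCoeff 0 0) +
      Algebra.TensorProduct.map ι ι (hT.comulCoeff 0 1) * (1 ⊗ₜ[k] x) +
      Algebra.TensorProduct.map ι ι (hT.comulCoeff 1 0) * (x ⊗ₜ[k] 1) +
      Algebra.TensorProduct.map ι ι (hT.comulCoeff 1 1) * (x ⊗ₜ[k] x) := by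
  have truncated : TensorProduct.map (hT.truncate 2) (hT.truncate 2) (comul x) =
      comul (R := k) x := by
    rw [← LinearMap.lTensor_comp_rTensor, LinearMap.comp_apply, hT.rTensor_truncate_comul_self hι,
      hT.lTensor_truncate_comul_self hι]
  rw [← truncated, hT.map_truncate_apply, Finset.sum_range_succ, Finset.sum_range_one,
    Finset.sum_range_succ, Finset.sum_range_one, Finset.sum_range_succ, Finset.sum_range_one]
  simp only [pow_zero, pow_one, ← Algebra.TensorProduct.one_def, mul_one, comulCoeff, add_assoc]

end DegreeBound

section Coassociativity

theorem coeff_comulSliceLeft_self (hT : IsOreExtension k σ δ ι x) (j : ℕ) :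
    hT.coeff j (comulSliceLeft hT.counitCoeff x) = sliceLeft counit (hT.comulCoeff 1 j) := by
  suffices hT.coeff j ∘ₗ sliceLeft hT.counitCoeff =
      sliceLeft counit ∘ₗ TensorProduct.map (hT.coeff 1) (hT.coeff j) from
    LinearMap.congr_fun this (comul x)
  exact TensorProduct.ext' fun s t => (hT.coeff j).map_smul (hT.counitCoeff s) t

theorem coeff_comulSliceRight_self (hT : IsOreExtension k σ δ ι x) (i : ℕ) :
    hT.coeff i (comulSliceRight hT.counitCoeff x) = sliceRight counit (hT.comulCoeff i 1) := by
  suffices hT.coeff i ∘ₗ sliceRight hT.counitCoeff =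
      sliceRight counit ∘ₗ TensorProduct.map (hT.coeff i) (hT.coeff 1) from
    LinearMap.congr_fun this (comul x)
  exact TensorProduct.ext' fun s t => (hT.coeff i).map_smul (hT.counitCoeff t) s

variable [IsDomain (R ⊗[k] R)]

theorem map_coeff_rTensor_comul_self (hT : IsOreExtension k σ δ ι x)
    (hι : IsHopfHom ι) {f : T →ₗ[k] T} (hf : ∀ r t, f (ι r * t) = ι r * f t) (hf_one : f 1 = 0)
    (i j : ℕ) :
    TensorProduct.map (hT.coeff i) (hT.coeff j) (f.rTensor T (comul x)) =
      hT.comulCoeff 1 j * (hT.coeff i (f x) ⊗ₜ[k] 1) := by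
  have map_mulRight (a : R) :
      TensorProduct.map (LinearMap.mulRight k a ∘ₗ hT.coeff 1) (hT.coeff j) =
      LinearMap.mulRight k (a ⊗ₜ[k] 1) ∘ₗ TensorProduct.map (hT.coeff 1) (hT.coeff j) :=
    TensorProduct.ext' fun s t => by simp
  calc TensorProduct.map (hT.coeff i) (hT.coeff j) (f.rTensor T (comul x))
      = TensorProduct.map (hT.coeff i) (hT.coeff j)
          (f.rTensor T ((hT.truncate 2).rTensor T (comul x))) := by
        rw [hT.rTensor_truncate_comul_self hι]
    _ = TensorProduct.map (hT.coeff i ∘ₗ f ∘ₗ hT.truncate 2) (hT.coeff j) (comul x) := by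
        rw [← LinearMap.rTensor_comp_apply, ← LinearMap.comp_apply, LinearMap.map_comp_rTensor]
    _ = hT.comulCoeff 1 j * (hT.coeff i (f x) ⊗ₜ[k] 1) := by
        rw [hT.coeff_comp_truncate_two hf hf_one, map_mulRight]
        rfl

theorem map_coeff_lTensor_comul_self (hT : IsOreExtension k σ δ ι x)
    (hι : IsHopfHom ι) {f : T →ₗ[k] T} (hf : ∀ r t, f (ι r * t) = ι r * f t) (hf_one : f 1 = 0)
    (i j : ℕ) :
    TensorProduct.map (hT.coeff i) (hT.coeff j) (f.lTensor T (comul x)) =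
      hT.comulCoeff i 1 * (1 ⊗ₜ[k] hT.coeff j (f x)) := by
  have map_mulRight (a : R) :
      TensorProduct.map (hT.coeff i) (LinearMap.mulRight k a ∘ₗ hT.coeff 1) =
      LinearMap.mulRight k (1 ⊗ₜ[k] a) ∘ₗ TensorProduct.map (hT.coeff i) (hT.coeff 1) :=
    TensorProduct.ext' fun s t => by simp
  calc TensorProduct.map (hT.coeff i) (hT.coeff j) (f.lTensor T (comul x))
      = TensorProduct.map (hT.coeff i) (hT.coeff j)
          (f.lTensor T ((hT.truncate 2).lTensor T (comul x))) := by
        rw [hT.lTensor_truncate_comul_self hι]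
    _ = TensorProduct.map (hT.coeff i) (hT.coeff j ∘ₗ f ∘ₗ hT.truncate 2) (comul x) := by
        rw [← LinearMap.lTensor_comp_apply, ← LinearMap.comp_apply, LinearMap.map_comp_lTensor]
    _ = hT.comulCoeff i 1 * (1 ⊗ₜ[k] hT.coeff j (f x)) := by
        rw [hT.coeff_comp_truncate_two hf hf_one, map_mulRight]
        rfl

theorem comulCoeff_mul_one_tmul (hT : IsOreExtension k σ δ ι x) (hι : IsHopfHom ι) (i j : ℕ) :
    hT.comulCoeff i 1 * (1 ⊗ₜ[k] sliceLeft counit (hT.comulCoeff 1 j)) =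
      hT.comulCoeff 1 j * (sliceRight counit (hT.comulCoeff i 1) ⊗ₜ[k] 1) := by
  rw [← coeff_comulSliceLeft_self, ← coeff_comulSliceRight_self,
    ← hT.map_coeff_lTensor_comul_self hι (hι.comulSliceLeft_map_mul hT.counitCoeff_map_mul)
      hT.comulSliceLeft_counitCoeff_one,
    ← hT.map_coeff_rTensor_comul_self hι (hι.comulSliceRight_map_mul hT.counitCoeff_map_mul)
      hT.comulSliceRight_counitCoeff_one,
    lTensor_comulSliceLeft_comul]

theorem comulSliceLeft_self (hT : IsOreExtension k σ δ ι x) (hι : IsHopfHom ι) :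
    comulSliceLeft hT.counitCoeff x =
      ι (sliceLeft counit (hT.comulCoeff 1 0)) + ι (sliceLeft counit (hT.comulCoeff 1 1)) * x := by
  have truncated : hT.truncate 2 (comulSliceLeft hT.counitCoeff x) =
      comulSliceLeft hT.counitCoeff x := by
    rw [comulSliceLeft, LinearMap.comp_apply, ← sliceLeft_lTensor,
      hT.lTensor_truncate_comul_self hι]
  rw [← truncated, truncate_apply, Finset.sum_range_succ, Finset.sum_range_one,
    coeff_comulSliceLeft_self, coeff_comulSliceLeft_self, pow_zero, pow_one, mul_one]

theorem comulSliceRight_self (hT : IsOreExtension k σ δ ι x) (hι : IsHopfHom ι) :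
    comulSliceRight hT.counitCoeff x =
      ι (sliceRight counit (hT.comulCoeff 0 1)) +
        ι (sliceRight counit (hT.comulCoeff 1 1)) * x := by
  have truncated : hT.truncate 2 (comulSliceRight hT.counitCoeff x) =
      comulSliceRight hT.counitCoeff x := by
    rw [comulSliceRight, LinearMap.comp_apply, ← sliceRight_rTensor,
      hT.rTensor_truncate_comul_self hι]
  rw [← truncated, truncate_apply, Finset.sum_range_succ, Finset.sum_range_one,
    coeff_comulSliceRight_self, coeff_comulSliceRight_self, pow_zero, pow_one, mul_one]

end Coassociativity

section MixedTerm

variable [IsDomain (R ⊗[k] R)]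

theorem exists_slice_comulCoeff_one_one_eq (hT : IsOreExtension k σ δ ι x) (hι : IsHopfHom ι)
    (mixed_ne_zero : hT.comulCoeff 1 1 ≠ 0) :
    ∃ l : k, l ≠ 0 ∧ sliceLeft counit (hT.comulCoeff 1 1) = algebraMap k R l ∧
      sliceRight counit (hT.comulCoeff 1 1) = algebraMap k R l := by
  have one_tmul_eq : 1 ⊗ₜ[k] sliceLeft counit (hT.comulCoeff 1 1) =
      sliceRight counit (hT.comulCoeff 1 1) ⊗ₜ[k] 1 :=
    mul_left_cancel₀ mixed_ne_zero (hT.comulCoeff_mul_one_tmul hι 1 1)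
  set l : k := counit (sliceRight counit (hT.comulCoeff 1 1))
  have left_eq : sliceLeft counit (hT.comulCoeff 1 1) = algebraMap k R l := by
    simpa only [sliceLeft_tmul, Bialgebra.counit_one, one_smul, ← Algebra.algebraMap_eq_smul_one]
      using congrArg (sliceLeft counit) one_tmul_eq
  have right_eq : sliceRight counit (hT.comulCoeff 1 1) = algebraMap k R l := by
    simpa only [sliceRight_tmul, Bialgebra.counit_one, one_smul, apply_sliceLeft,
      ← Algebra.algebraMap_eq_smul_one] using (congrArg (sliceRight counit) one_tmul_eq).symm
  refine ⟨l, fun l_eq_zero => ?_, left_eq, right_eq⟩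
  rw [l_eq_zero, map_zero] at left_eq right_eq
  have one_tmul_eq_zero : 1 ⊗ₜ[k] sliceLeft counit (hT.comulCoeff 1 0) = (0 : R ⊗[k] R) :=
    mul_left_cancel₀ mixed_ne_zero <| by
      rw [hT.comulCoeff_mul_one_tmul hι, right_eq, TensorProduct.zero_tmul, mul_zero, mul_zero]
  have constant_eq_zero : sliceLeft counit (hT.comulCoeff 1 0) = 0 := by
    simpa only [sliceLeft_tmul, Bialgebra.counit_one, one_smul, map_zero]
      using congrArg (sliceLeft counit) one_tmul_eq_zero
  have counit_eq_one := counit_comulSliceLeft hT.counitCoeff x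
  rw [hT.comulSliceLeft_self hι, constant_eq_zero, left_eq, map_zero, zero_mul, add_zero, map_zero,
    hT.counitCoeff_self] at counit_eq_one
  exact zero_ne_one counit_eq_one

theorem exists_sq_smul_comul_self_eq (hT : IsOreExtension k σ δ ι x) (hι : IsHopfHom ι) {l : k}
    (left_eq : sliceLeft counit (hT.comulCoeff 1 1) = algebraMap k R l)
    (right_eq : sliceRight counit (hT.comulCoeff 1 1) = algebraMap k R l) :
    ∃ w : R ⊗[k] R, l ^ 2 • comul (R := k) x =
      Algebra.TensorProduct.map ι ι (hT.comulCoeff 1 1) *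
        (comulSliceRight hT.counitCoeff x ⊗ₜ[k] comulSliceLeft hT.counitCoeff x) +
      Algebra.TensorProduct.map ι ι w := by
  set a := sliceLeft counit (hT.comulCoeff 1 0)
  set b := sliceRight counit (hT.comulCoeff 0 1)
  set ιι := Algebra.TensorProduct.map ι ι
  have mul_b : hT.comulCoeff 1 1 * (b ⊗ₜ 1) = l • hT.comulCoeff 0 1 := by
    rw [← hT.comulCoeff_mul_one_tmul hι 0 1, left_eq, Algebra.algebraMap_eq_smul_one,
      TensorProduct.tmul_smul, ← Algebra.TensorProduct.one_def, mul_smul_comm, mul_one]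
  have mul_a : hT.comulCoeff 1 1 * (1 ⊗ₜ a) = l • hT.comulCoeff 1 0 := by
    rw [hT.comulCoeff_mul_one_tmul hι 1 0, right_eq, Algebra.algebraMap_eq_smul_one,
      ← TensorProduct.smul_tmul', ← Algebra.TensorProduct.one_def, mul_smul_comm, mul_one]
  have slice_left : comulSliceLeft hT.counitCoeff x = ι a + l • x := by
    rw [hT.comulSliceLeft_self hι, left_eq, AlgHom.commutes, Algebra.smul_def]
  have slice_right : comulSliceRight hT.counitCoeff x = ι b + l • x := by
    rw [hT.comulSliceRight_self hι, right_eq, AlgHom.commutes, Algebra.smul_def]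
  have slices_tmul :
      comulSliceRight hT.counitCoeff x ⊗ₜ[k] comulSliceLeft hT.counitCoeff x =
        ιι (b ⊗ₜ a) + l • (ιι (b ⊗ₜ 1) * (1 ⊗ₜ x)) + l • (ιι (1 ⊗ₜ a) * (x ⊗ₜ 1)) +
          l ^ 2 • (x ⊗ₜ x) := by
    simp only [slice_left, slice_right, ιι, Algebra.TensorProduct.map_tmul, map_one,
      Algebra.TensorProduct.tmul_mul_tmul, mul_one, one_mul, TensorProduct.add_tmul,
      TensorProduct.tmul_add, ← TensorProduct.smul_tmul', TensorProduct.tmul_smul, smul_add,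
      smul_smul, sq]
    abel
  refine ⟨l ^ 2 • hT.comulCoeff 0 0 - hT.comulCoeff 1 1 * (b ⊗ₜ a), ?_⟩
  rw [hT.comul_self_eq hι, slices_tmul]
  simp only [mul_add, mul_smul_comm, ← mul_assoc, ← map_mul, mul_a, mul_b, map_sub, map_smul,
    smul_mul_assoc, smul_add, smul_smul, sq]
  abel

theorem comulCoeff_one_one (hT : IsOreExtension k σ δ ι x) (hι : IsHopfHom ι) :
    hT.comulCoeff 1 1 = 0 := by
  have := isDomain_of_tensorProduct_self k R
  by_contra mixed_ne_zero
  obtain ⟨l, l_ne_zero, left_eq, right_eq⟩ :=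
    hT.exists_slice_comulCoeff_one_one_eq hι mixed_ne_zero
  obtain ⟨w, comul_eq⟩ := hT.exists_sq_smul_comul_self_eq hι left_eq right_eq
  set s := HopfAlgebra.antipode k (comulSliceRight hT.counitCoeff x) *
    ι (antipodeMul k R (hT.comulCoeff 1 1)) with s_def
  set z := comulSliceLeft hT.counitCoeff x
  have s_mul_z : s * z = ι (algebraMap k R (l ^ 2 * counit x) - antipodeMul k R w) := by
    rw [map_sub, eq_sub_iff_add_eq, ← hι.antipodeMul_map w, s_def, ← hι.antipodeMul_map,
      ← antipodeMul_mul_tmul, ← map_add, ← comul_eq, map_smul, antipodeMul_comul,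
      AlgHom.commutes, map_mul, Algebra.smul_def]
  have s_ne_zero : s ≠ 0 := fun s_eq_zero => l_ne_zero <| by
    have counit_s : counit (R := k) s = l := by
      rw [s_def, Bialgebra.counit_mul, HopfAlgebra.counit_antipode, counit_comulSliceRight,
        hT.counitCoeff_self, hι.counit_map, counit_antipodeMul, left_eq,
        Bialgebra.counit_algebraMap, one_mul]
    rw [← counit_s, s_eq_zero, map_zero]
  have coeff_z : hT.coeff 1 z ≠ 0 := by
    rw [coeff_comulSliceLeft_self, left_eq]
    exact (map_ne_zero_iff _ (algebraMap k R).injective).mpr l_ne_zero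
  have one_le_natDegree : 1 ≤ hT.natDegree (s * z) := by
    rw [hT.natDegree_mul s_ne_zero (ne_zero_of_map coeff_z)]
    exact le_add_left (hT.le_natDegree_of_ne_zero coeff_z)
  rw [s_mul_z, hT.natDegree_map] at one_le_natDegree
  exact one_le_natDegree.not_gt zero_lt_one

end MixedTerm

section GroupLike

variable [IsDomain (R ⊗[k] R)]

theorem comulSliceLeft_self_eq_map (hT : IsOreExtension k σ δ ι x) (hι : IsHopfHom ι) :
    comulSliceLeft hT.counitCoeff x = ι (sliceLeft counit (hT.comulCoeff 1 0)) := by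
  rw [hT.comulSliceLeft_self hι, hT.comulCoeff_one_one hι, map_zero, map_zero, zero_mul, add_zero]

theorem comulSliceRight_self_eq_map (hT : IsOreExtension k σ δ ι x) (hι : IsHopfHom ι) :
    comulSliceRight hT.counitCoeff x = ι (sliceRight counit (hT.comulCoeff 0 1)) := by
  rw [hT.comulSliceRight_self hι, hT.comulCoeff_one_one hι, map_zero, map_zero, zero_mul, add_zero]

theorem comul_sliceLeft_comulCoeff (hT : IsOreExtension k σ δ ι x) (hι : IsHopfHom ι) :
    comul (sliceLeft counit (hT.comulCoeff 1 0)) =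
      hT.comulCoeff 1 0 * (sliceLeft counit (hT.comulCoeff 1 0) ⊗ₜ[k] 1) := by
  rw [← hT.map_coeff_zero_map (comul _), ← hι.comul_map, ← hT.comulSliceLeft_self_eq_map hι,
    comul_comulSliceLeft, ← hT.coeff_comulSliceLeft_self]
  exact hT.map_coeff_rTensor_comul_self hι (hι.comulSliceLeft_map_mul hT.counitCoeff_map_mul)
    hT.comulSliceLeft_counitCoeff_one 0 0

theorem comul_sliceRight_comulCoeff (hT : IsOreExtension k σ δ ι x) (hι : IsHopfHom ι) :
    comul (sliceRight counit (hT.comulCoeff 0 1)) =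
      hT.comulCoeff 0 1 * (1 ⊗ₜ[k] sliceRight counit (hT.comulCoeff 0 1)) := by
  rw [← hT.map_coeff_zero_map (comul _), ← hι.comul_map, ← hT.comulSliceRight_self_eq_map hι,
    comul_comulSliceRight, ← hT.coeff_comulSliceRight_self]
  exact hT.map_coeff_lTensor_comul_self hι (hι.comulSliceRight_map_mul hT.counitCoeff_map_mul)
    hT.comulSliceRight_counitCoeff_one 0 0

theorem counit_sliceLeft_comulCoeff (hT : IsOreExtension k σ δ ι x) (hι : IsHopfHom ι) :
    counit (R := k) (sliceLeft counit (hT.comulCoeff 1 0)) = 1 := by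
  rw [← hι.counit_map, ← hT.comulSliceLeft_self_eq_map hι, counit_comulSliceLeft,
    hT.counitCoeff_self]

theorem counit_sliceRight_comulCoeff (hT : IsOreExtension k σ δ ι x) (hι : IsHopfHom ι) :
    counit (R := k) (sliceRight counit (hT.comulCoeff 0 1)) = 1 := by
  rw [← hι.counit_map, ← hT.comulSliceRight_self_eq_map hι, counit_comulSliceRight,
    hT.counitCoeff_self]

theorem exists_comul_units_mul_self_eq (hT : IsOreExtension k σ δ ι x) (hι : IsHopfHom ι) :
    ∃ (u β : Rˣ) (w : R ⊗[k] R), IsGroupLikeElem k (β : R) ∧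
      comul (R := k) (ι u * x) =
        ι ↑β⁻¹ ⊗ₜ (ι u * x) + (ι u * x) ⊗ₜ 1 + Algebra.TensorProduct.map ι ι w := by
  have := isDomain_of_tensorProduct_self k R
  obtain ⟨u, β, groupLike_β, mul_c, mul_d⟩ := exists_isGroupLikeElem_of_comul_eq
    (hT.comul_sliceLeft_comulCoeff hι) (hT.comul_sliceRight_comulCoeff hι)
    (hT.comulCoeff_mul_one_tmul hι 0 0) (hT.counit_sliceLeft_comulCoeff hι)
    (hT.counit_sliceRight_comulCoeff hι)
  refine ⟨u, β, comul (R := k) (u : R) * hT.comulCoeff 0 0, groupLike_β, ?_⟩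
  rw [Bialgebra.comul_mul, hι.comul_map, hT.comul_self_eq hι, hT.comulCoeff_one_one hι]
  simp only [mul_add, ← mul_assoc, ← map_mul, mul_c, mul_d, Algebra.TensorProduct.map_tmul,
    Algebra.TensorProduct.tmul_mul_tmul, map_zero, mul_zero, zero_mul, map_one, mul_one]
  abel

end GroupLike

end ComulCoeff

end IsOreExtension

namespace HopfAlgebraStructure

variable {k T : Type*} [Field k] [Ring T] [Algebra k T]

/-- The Mathlib Hopf algebra with the operations of a bundled Hopf algebra structure. -/
@[reducible]
noncomputable def toHopfAlgebra_s4 (H : HopfAlgebraStructure k T) : HopfAlgebra k T :=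
  letI : Coalgebra k T :=
    { comul := H.comul
      counit := H.counit
      coassoc := LinearMap.ext fun t => (LinearEquiv.eq_symm_apply _).mp (H.coassoc t)
      rTensor_counit_comp_comul := LinearMap.ext fun t =>
        (LinearEquiv.eq_symm_apply _).mpr (H.counit_comul t)
      lTensor_counit_comp_comul := LinearMap.ext fun t =>
        (LinearEquiv.eq_symm_apply _).mpr (H.comul_counit t) }
  { Bialgebra.mk' k T H.counit_one (H.counit_mul _ _) H.comul_one (H.comul_mul _ _) with
    antipode := H.antipode
    mul_antipode_rTensor_comul := LinearMap.ext H.antipode_mul_id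
    mul_antipode_lTensor_comul := LinearMap.ext H.id_mul_antipode }

end HopfAlgebraStructure

theorem stmt4_general {k R T : Type*} [Field k] [Ring R] [HopfAlgebra k R]
    [IsDomain (R ⊗[k] R)] [Ring T] [Algebra k T]
    (σ : R ≃ₐ[k] R) (δ : R →ₗ[k] R) (ι : R →ₐ[k] T) (x : T)
    (hT : IsOreExtension k σ δ ι x)
    (H : HopfAlgebraStructure k T) (hH : ExtendsHopf k ι H) :
    ∃ (y : T) (σ' : R ≃ₐ[k] R) (δ' : R →ₗ[k] R),
      IsOreExtension k σ' δ' ι y ∧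
      (∃ (β βi : R) (w : R ⊗[k] R),
        β * βi = 1 ∧ βi * β = 1 ∧
        Coalgebra.comul β = β ⊗ₜ[k] β ∧ Coalgebra.counit (R := k) β = 1 ∧
        H.comul y = ι βi ⊗ₜ[k] y + y ⊗ₜ[k] 1
            + TensorProduct.map ι.toLinearMap ι.toLinearMap w) ∧
      (∃ (a b : R) (v w' : R ⊗[k] R),
        H.comul y = ι a ⊗ₜ[k] y + y ⊗ₜ[k] ι b
            + TensorProduct.map ι.toLinearMap ι.toLinearMap v * (y ⊗ₜ[k] y)
            + TensorProduct.map ι.toLinearMap ι.toLinearMap w') := by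
  let := H.toHopfAlgebra_s4
  have hι : IsHopfHom ι := ⟨hH.1, hH.2.1, hH.2.2⟩
  have := isDomain_of_tensorProduct_self k R
  obtain ⟨u, β, w, groupLike_β, comul_eq⟩ := hT.exists_comul_units_mul_self_eq hι
  refine ⟨ι u * x, _, _, hT.units_mul u, ⟨β, ↑β⁻¹, w, β.mul_inv, β.inv_mul,
    groupLike_β.comul_eq_tmul_self, groupLike_β.counit_eq_one, comul_eq⟩, ↑β⁻¹, 1, 0, w, ?_⟩
  rw [map_one, map_zero, zero_mul, add_zero]
  exact comul_eq

/-- **Corollary 2.3.** Let `R` be a noetherian Hopf `k`-algebra with `R ⊗ₖ R` a domain and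
suppose `T = R[x; σ, δ]` admits a Hopf algebra structure extending that of `R`.  Then after a
change of the variable `x`, `Δ(x) = β⁻¹ ⊗ x + x ⊗ 1 + w` with `β ∈ R` grouplike and
`w ∈ R ⊗ₖ R`.  In particular `Δ(x)` has the form `a ⊗ x + x ⊗ b + v(x ⊗ x) + w` with
`a, b ∈ R` and `v, w ∈ R ⊗ₖ R`. -/
theorem stmt4 {k R T : Type*} [Field k] [Ring R] [HopfAlgebra k R]
    [IsNoetherianRing R] [IsDomain (R ⊗[k] R)] [Ring T] [Algebra k T]
    (σ : R ≃ₐ[k] R) (δ : R →ₗ[k] R) (ι : R →ₐ[k] T) (x : T)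
    (hT : IsOreExtension k σ δ ι x)
    (H : HopfAlgebraStructure k T) (hH : ExtendsHopf k ι H) :
    ∃ (y : T) (σ' : R ≃ₐ[k] R) (δ' : R →ₗ[k] R),
      IsOreExtension k σ' δ' ι y ∧
      (∃ (β βi : R) (w : R ⊗[k] R),
        β * βi = 1 ∧ βi * β = 1 ∧
        Coalgebra.comul β = β ⊗ₜ[k] β ∧ Coalgebra.counit (R := k) β = 1 ∧
        H.comul y = ι βi ⊗ₜ[k] y + y ⊗ₜ[k] 1
            + TensorProduct.map ι.toLinearMap ι.toLinearMap w) ∧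
      (∃ (a b : R) (v w' : R ⊗[k] R),
        H.comul y = ι a ⊗ₜ[k] y + y ⊗ₜ[k] ι b
            + TensorProduct.map ι.toLinearMap ι.toLinearMap v * (y ⊗ₜ[k] y)
            + TensorProduct.map ι.toLinearMap ι.toLinearMap w') :=
  stmt4_general σ δ ι x hT H hH
end
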